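/- Let q be sufficiently large, χ a real non-principal Dirichlet character mod q, and β a real zero of L(s,χ). Then for every x ≥ q²: ∑_{q² ≤ p ≤ x} (1 + χ(p))·p^{−1} ≤ 2·(1−β)·log x, where the sum is over primes p. -/

import Mathlib

open scoped Classical

/-!
Put `r = 1 * χ`, which is nonnegative, multiplicative, and at least `1` at squares. Write `S(t)`
for its generating function `∑ r(n) exp (-n t)`, and `M` for a bound on the partial sums of `χ`.
Summation by parts against the monotone kernel `1 / u - 1 / (exp u - 1)` gives
`|L(1, χ) / t - S(t)| ≤ M` for all `t > 0`, and the Mellin transform of this difference at `β` is a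
multiple of `L(β, χ)`. When `β` is a zero, the transform vanishes, which forces
`∑_{n < Q} r(n) / n` to be at least about `L(1, χ) / (1 - β)` for `Q = q²`. On the other hand
`r(p n) = (1 + χ(p)) r(n)` for `n < Q ≤ p`, and the products `p n` are distinct, so
`(∑ (1 + χ(p)) / p) (∑_{n < Q} r(n) / n)` is at most the sum of `r(m) / m` over `Q ≤ m ≤ x Q`, which
is about `L(1, χ) log x`. Dividing gives the bound with a constant below `2`, the slack absorbing
the errors: these are at most a small multiple of `L(1, χ)`, because `M ≤ q / 250` and
`42 M L(1, χ) ≥ 1`. For `β < 1 / 2` the trivial estimate `1 + χ(p) ≤ 2` suffices.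
-/

section

open Filter Topology MeasureTheory

/-- The Dirichlet convolution `1 * c`; it does not see the value `c 0`. -/
noncomputable def divisorSum (c : ℕ → ℝ) (n : ℕ) : ℝ := ∑ d ∈ n.divisors, c d

section DivisorSum

lemma divisorSum_zero (c : ℕ → ℝ) : divisorSum c 0 = 0 := by
  rw [divisorSum, Nat.divisors_zero, Finset.sum_empty]

lemma abs_divisorSum_le_self {c : ℕ → ℝ} (hc : ∀ n, |c n| ≤ 1) (n : ℕ) : |divisorSum c n| ≤ n :=
  calc |divisorSum c n| ≤ ∑ d ∈ n.divisors, |c d| := Finset.abs_sum_le_sum_abs _ _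
    _ ≤ ∑ _d ∈ n.divisors, (1 : ℝ) := Finset.sum_le_sum fun _ _ ↦ hc _
    _ = n.divisors.card := by rw [Finset.sum_const, nsmul_one]
    _ ≤ n := by exact_mod_cast Nat.card_divisors_le_self n

variable {c : ℕ →*₀ ℝ}

lemma divisorSum_mul {m n : ℕ} (h : m.Coprime n) :
    divisorSum c (m * n) = divisorSum c m * divisorSum c n := by
  rw [divisorSum, divisorSum, divisorSum, Nat.divisors_mul, Finset.mul_def,
    Finset.sum_image h.mul_injOn_divisors, Finset.sum_mul_sum, Finset.sum_product]
  simp only [map_mul]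

lemma divisorSum_prime_pow {p : ℕ} (hp : p.Prime) (k : ℕ) :
    divisorSum c (p ^ k) = ∑ i ∈ Finset.range (k + 1), c p ^ i := by
  simp [divisorSum, Nat.sum_divisors_prime_pow hp]

lemma divisorSum_prime {p : ℕ} (hp : p.Prime) : divisorSum c p = 1 + c p := by
  simp [divisorSum, hp.sum_divisors, add_comm]

lemma divisorSum_nonneg (hc : ∀ n, c n = 0 ∨ c n = 1 ∨ c n = -1) (n : ℕ) :
    0 ≤ divisorSum c n := by
  induction n using Nat.recOnPosPrimePosCoprime with
  | zero => simp [divisorSum]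
  | one => simp [divisorSum]
  | prime_pow p k hp _ =>
    rw [divisorSum_prime_pow hp]
    rcases hc p with h | h | h
    · exact Finset.sum_nonneg fun i _ ↦ by rw [h]; positivity
    · exact Finset.sum_nonneg fun i _ ↦ by rw [h]; positivity
    · rw [h, neg_one_geom_sum]; split_ifs <;> norm_num
  | coprime a b _ _ hab iha ihb =>
    rw [divisorSum_mul hab]; positivity

lemma one_le_divisorSum_sq (hc : ∀ n, c n = 0 ∨ c n = 1 ∨ c n = -1) {n : ℕ} (hn : n ≠ 0) :
    1 ≤ divisorSum c (n ^ 2) := by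
  induction n using Nat.recOnPosPrimePosCoprime with
  | zero => exact absurd rfl hn
  | one => simp [divisorSum]
  | prime_pow p k hp _ =>
    rw [← pow_mul, divisorSum_prime_pow hp]
    rcases hc p with h | h | h
    · rw [h, Finset.sum_range_succ', pow_zero]
      exact le_add_of_nonneg_left (Finset.sum_nonneg fun i _ ↦ by positivity)
    · rw [h]; simp
    · rw [h, neg_one_geom_sum, if_neg (by simp : ¬ Even (k * 2 + 1))]
  | coprime a b _ _ hab iha ihb =>
    rw [mul_pow, divisorSum_mul (hab.pow 2 2)]
    exact one_le_mul_of_one_le_of_one_le (iha (by lia)) (ihb (by lia))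

end DivisorSum

/-- The difference between `1 / u` and the Lambert kernel `1 / (exp u - 1)`. Division by zero
gives `expGap 0 = 0`. -/
noncomputable def expGap (u : ℝ) : ℝ := 1 / u - 1 / (Real.exp u - 1)

section ExpGap

variable {u : ℝ}

lemma expGap_zero : expGap 0 = 0 := by simp [expGap]

lemma expGap_nonneg (hu : 0 < u) : 0 ≤ expGap u :=
  sub_nonneg.2 <| one_div_le_one_div_of_le hu <| by linarith [Real.add_one_le_exp u]

lemma expGap_le_inv (hu : 0 < u) : expGap u ≤ u⁻¹ := by
  have hexp := Real.one_lt_exp_iff.2 hu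
  rw [expGap, one_div u, sub_le_self_iff]
  exact one_div_nonneg.2 (by linarith)

lemma expGap_le_one (hu : 0 < u) : expGap u ≤ 1 := by
  have hexp : 0 < Real.exp u - 1 := by linarith [Real.one_lt_exp_iff.2 hu]
  have hmul : (1 - u) * Real.exp u ≤ 1 := calc
    (1 - u) * Real.exp u ≤ Real.exp (-u) * Real.exp u := by
      gcongr
      exact Real.one_sub_le_exp_neg u
    _ = 1 := by rw [← Real.exp_add, neg_add_cancel, Real.exp_zero]
  rw [expGap, div_sub_div _ _ hu.ne' hexp.ne', div_le_one (by positivity)]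
  linarith

lemma hasDerivAt_expGap (hu : 0 < u) :
    HasDerivAt expGap (Real.exp u / (Real.exp u - 1) ^ 2 - 1 / u ^ 2) u := by
  have hexp : Real.exp u - 1 ≠ 0 := by linarith [Real.one_lt_exp_iff.2 hu]
  have h := (hasDerivAt_inv hu.ne').sub (((Real.hasDerivAt_exp u).sub_const 1).fun_inv hexp)
  refine (h.congr_of_eventuallyEq (.of_forall fun v ↦ ?_)).congr_deriv (by ring)
  simp only [expGap, one_div, Pi.sub_apply]

lemma continuousOn_expGap : ContinuousOn expGap (Set.Ioi 0) :=
  fun _ hu ↦ (hasDerivAt_expGap hu).continuousAt.continuousWithinAt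

lemma sq_mul_exp_le_exp_sub_one_sq (hu : 0 ≤ u) :
    u ^ 2 * Real.exp u ≤ (Real.exp u - 1) ^ 2 := by
  have hsq : Real.exp u = Real.exp (u / 2) ^ 2 := by rw [← Real.exp_nat_mul]; ring_nf
  have hsinh : u ≤ Real.exp (u / 2) - Real.exp (-(u / 2)) := by
    linarith [Real.self_le_sinh_iff.2 (by positivity : 0 ≤ u / 2), Real.sinh_eq (u / 2)]
  have hle : u * Real.exp (u / 2) ≤ Real.exp u - 1 := calc
    u * Real.exp (u / 2) ≤ (Real.exp (u / 2) - Real.exp (-(u / 2))) * Real.exp (u / 2) := by gcongr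
    _ = Real.exp u - 1 := by
      rw [sub_mul, ← Real.exp_add, ← Real.exp_add, add_halves, neg_add_cancel, Real.exp_zero]
  calc u ^ 2 * Real.exp u = (u * Real.exp (u / 2)) ^ 2 := by rw [hsq]; ring
    _ ≤ _ := by gcongr

lemma antitoneOn_expGap : AntitoneOn expGap (Set.Ioi 0) := by
  refine antitoneOn_of_deriv_nonpos (convex_Ioi 0) continuousOn_expGap
    (fun u hu ↦ ?_) (fun u hu ↦ ?_) <;> rw [interior_Ioi, Set.mem_Ioi] at hu
  · exact (hasDerivAt_expGap hu).differentiableAt.differentiableWithinAt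
  · have hexp : 0 < Real.exp u - 1 := by linarith [Real.one_lt_exp_iff.2 hu]
    rw [(hasDerivAt_expGap hu).deriv, sub_nonpos, div_le_div_iff₀ (by positivity) (by positivity)]
    linarith [sq_mul_exp_le_exp_sub_one_sq hu.le]

end ExpGap

lemma abs_sum_mul_le_of_antitone {a b : ℕ → ℝ} {M : ℝ}
    (hM : ∀ N, |∑ n ∈ Finset.range N, a n| ≤ M) (hb : Antitone b) (hb0 : ∀ n, 0 ≤ b n) (N : ℕ) :
    |∑ n ∈ Finset.range N, a n * b n| ≤ M * b 0 := by
  have hdiff : ∀ i, b i - b (i + 1) = |b (i + 1) - b i| := fun i ↦ by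
    rw [abs_sub_comm, abs_of_nonneg (sub_nonneg.2 (hb i.le_succ))]
  calc |∑ n ∈ Finset.range N, a n * b n|
      = |b (N - 1) * ∑ n ∈ Finset.range N, a n - ∑ i ∈ Finset.range (N - 1),
          (b (i + 1) - b i) * ∑ n ∈ Finset.range (i + 1), a n| := by
        simpa only [smul_eq_mul, mul_comm (b _) (a _)] using
          congrArg abs (Finset.sum_range_by_parts b a N)
    _ ≤ b (N - 1) * |∑ n ∈ Finset.range N, a n| + ∑ i ∈ Finset.range (N - 1),
          (b i - b (i + 1)) * |∑ n ∈ Finset.range (i + 1), a n| := by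
        refine (abs_sub _ _).trans ?_
        gcongr
        · rw [abs_mul, abs_of_nonneg (hb0 _)]
        · refine (Finset.abs_sum_le_sum_abs _ _).trans_eq (Finset.sum_congr rfl fun i _ ↦ ?_)
          rw [abs_mul, hdiff]
    _ ≤ b (N - 1) * M + ∑ i ∈ Finset.range (N - 1), (b i - b (i + 1)) * M := by
        gcongr with i
        · exact hb0 _
        · exact hM N
        · exact sub_nonneg.2 (hb i.le_succ)
        · exact hM _
    _ = M * b 0 := by rw [← Finset.sum_mul, Finset.sum_range_sub']; ring

/-- The generating function of `r` in the variable `exp (-t)`. For `r = divisorSum c` it is the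
Lambert series of `c`. -/
noncomputable def expSeries (r : ℕ → ℝ) (t : ℝ) : ℝ := ∑' n : ℕ, r n * Real.exp (-(n * t))

section ExpSeries

variable {r : ℕ → ℝ} {t : ℝ}

lemma summable_expSeries (hr : ∀ n, |r n| ≤ n) (ht : 0 < t) :
    Summable fun n : ℕ ↦ r n * Real.exp (-(n * t)) := by
  refine Summable.of_norm_bounded (Real.summable_pow_mul_exp_neg_nat_mul 1 ht) fun n ↦ ?_
  rw [norm_mul, Real.norm_eq_abs, Real.norm_of_nonneg (Real.exp_pos _).le, pow_one, neg_mul,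
    mul_comm t]
  gcongr
  exact hr n

lemma sum_le_expSeries (hr : ∀ n, |r n| ≤ n) (hr0 : ∀ n, 0 ≤ r n) (ht : 0 < t)
    (s : Finset ℕ) : ∑ n ∈ s, r n * Real.exp (-(n * t)) ≤ expSeries r t :=
  (summable_expSeries hr ht).sum_le_tsum s fun n _ ↦ mul_nonneg (hr0 n) (Real.exp_pos _).le

lemma expSeries_nonneg (hr0 : ∀ n, 0 ≤ r n) : 0 ≤ expSeries r t :=
  tsum_nonneg fun n ↦ mul_nonneg (hr0 n) (Real.exp_pos _).le

end ExpSeries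

section Lambert

lemma hasSum_exp_neg_mul_pnat {u : ℝ} (hu : 0 < u) :
    HasSum (fun k : ℕ+ ↦ Real.exp (-(k * u))) (1 / (Real.exp u - 1)) := by
  have hexp : Real.exp u - 1 ≠ 0 := by linarith [Real.one_lt_exp_iff.2 hu]
  have hgeom := hasSum_geometric_of_lt_one (Real.exp_pos (-u)).le
    (Real.exp_lt_one_iff.2 (neg_lt_zero.2 hu))
  have hval : (1 - Real.exp (-u))⁻¹ = 1 / (Real.exp u - 1) + Real.exp (-u) ^ 0 := by
    rw [Real.exp_neg, pow_zero]
    field_simp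
    ring
  have hterm : ∀ k : ℕ, Real.exp (-(k * u)) = Real.exp (-u) ^ k := fun k ↦ by
    rw [← Real.exp_nat_mul, mul_neg]
  simp only [hterm]
  exact (hasSum_pnat_iff (f := fun k : ℕ ↦ Real.exp (-u) ^ k)).2 (hval ▸ hgeom)

variable {c : ℕ → ℝ} {t : ℝ}

lemma summable_lambert (hc : ∀ n, |c n| ≤ 1) (ht : 0 < t) :
    Summable fun x : ℕ+ × ℕ+ ↦ c x.1 * Real.exp (-((x.1 * x.2 : ℕ) * t)) := by
  have hgeom : Summable fun x : ℕ+ × ℕ+ ↦ Real.exp (-((x.1 * x.2 : ℕ) * t)) := by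
    refine (summable_prod_mul_pow 0 (by simpa using ht : ‖Real.exp (-t)‖ < 1)).congr fun x ↦ ?_
    rw [← Real.exp_nat_mul, pow_zero, one_mul, mul_neg]
  refine Summable.of_norm_bounded hgeom fun x ↦ ?_
  rw [norm_mul, Real.norm_of_nonneg (Real.exp_pos _).le]
  exact mul_le_of_le_one_left (Real.exp_pos _).le (hc _)

lemma sum_divisorsAntidiagonal_mul_exp (n : ℕ) :
    ∑ x ∈ n.divisorsAntidiagonal, c x.1 * Real.exp (-((x.1 * x.2 : ℕ) * t)) =
      divisorSum c n * Real.exp (-(n * t)) := by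
  rw [divisorSum, Finset.sum_mul,
    ← Nat.sum_divisorsAntidiagonal (fun d _ ↦ c d * Real.exp (-((n : ℕ) * t)))]
  refine Finset.sum_congr rfl fun x hx ↦ ?_
  rw [(Nat.mem_divisorsAntidiagonal.1 hx).1]

lemma hasSum_lambert (hc : ∀ n, |c n| ≤ 1) (ht : 0 < t) :
    HasSum (fun n : ℕ ↦ c n * (1 / (Real.exp (n * t) - 1))) (expSeries (divisorSum c) t) := by
  have hsum := (summable_lambert hc ht).hasSum
  have hrows : HasSum (fun d : ℕ+ ↦ c d * (1 / (Real.exp (d * t) - 1)))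
      (∑' x : ℕ+ × ℕ+, c x.1 * Real.exp (-((x.1 * x.2 : ℕ) * t))) := by
    refine hsum.prod_fiberwise fun d ↦ ?_
    have hd : (0 : ℝ) < (d : ℕ) * t := mul_pos (mod_cast d.pos) ht
    refine ((hasSum_exp_neg_mul_pnat hd).mul_left (c d)).congr_fun fun k ↦ ?_
    push_cast
    ring_nf
  have hdiag : HasSum (fun n : ℕ+ ↦ divisorSum c n * Real.exp (-((n : ℕ) * t)))
      (∑' x : ℕ+ × ℕ+, c x.1 * Real.exp (-((x.1 * x.2 : ℕ) * t))) := by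
    refine (sigmaAntidiagonalEquivProd.hasSum_iff.2 hsum).sigma fun n ↦ ?_
    rw [← sum_divisorsAntidiagonal_mul_exp, ← Finset.sum_coe_sort]
    exact hasSum_fintype _
  have hdiag' := (hasSum_pnat_iff (f := fun n : ℕ ↦ divisorSum c n * Real.exp (-(n * t)))).1 hdiag
  have hrows' := (hasSum_pnat_iff (f := fun n : ℕ ↦ c n * (1 / (Real.exp (n * t) - 1)))).1 hrows
  rw [divisorSum_zero, zero_mul, add_zero] at hdiag'
  rw [Nat.cast_zero, zero_mul, Real.exp_zero, sub_self, div_zero, mul_zero, add_zero] at hrows'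
  rwa [expSeries, hdiag'.tsum_eq]

end Lambert

/-- `∑ c(n) n⁻ˢ`, summed in the order of increasing `n`, converges to `L`. The convergence need
not be absolute. -/
def HasDirichletSum (c : ℕ → ℝ) (s L : ℝ) : Prop :=
  Tendsto (fun N ↦ ∑ n ∈ Finset.range N, c n * (n : ℝ) ^ (-s)) atTop (𝓝 L)

section MeanValue

variable {c : ℕ → ℝ} {M L t : ℝ}

lemma tendsto_sum_mul_expGap (hc : ∀ n, |c n| ≤ 1) (hL : HasDirichletSum c 1 L) (ht : 0 < t) :
    Tendsto (fun N ↦ ∑ n ∈ Finset.range N, c n * expGap (n * t)) atTop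
      (𝓝 (L / t - expSeries (divisorSum c) t)) := by
  refine ((hL.div_const t).sub (hasSum_lambert hc ht).tendsto_sum_nat).congr fun N ↦ ?_
  rw [Finset.sum_div, ← Finset.sum_sub_distrib]
  refine Finset.sum_congr rfl fun n _ ↦ ?_
  rw [expGap, mul_sub, Real.rpow_neg_one, mul_div_assoc, ← div_div, one_div (n : ℝ)]

lemma abs_sum_mul_expGap_le (h0 : c 0 = 0) (hM : ∀ N, |∑ n ∈ Finset.range N, c n| ≤ M)
    (ht : 0 < t) (N : ℕ) :
    |∑ n ∈ Finset.range N, c n * expGap (n * t)| ≤ M * expGap t := by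
  have hshift : ∀ N, |∑ n ∈ Finset.range N, c (n + 1)| ≤ M := fun N ↦ by
    simpa only [Finset.sum_range_succ', h0, add_zero] using hM (N + 1)
  have hanti : Antitone fun n : ℕ ↦ expGap ((n + 1 : ℕ) * t) := fun m n hmn ↦
    antitoneOn_expGap (Set.mem_Ioi.2 (by positivity)) (Set.mem_Ioi.2 (by positivity)) (by gcongr)
  cases N with
  | zero => simpa using mul_nonneg ((abs_nonneg _).trans (hM 0)) (expGap_nonneg ht)
  | succ N =>
    simpa [Finset.sum_range_succ', h0] using
      abs_sum_mul_le_of_antitone hshift hanti (fun n ↦ expGap_nonneg (by positivity)) N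

lemma abs_div_sub_expSeries_le (hc : ∀ n, |c n| ≤ 1) (h0 : c 0 = 0)
    (hM : ∀ N, |∑ n ∈ Finset.range N, c n| ≤ M) (hL : HasDirichletSum c 1 L) (ht : 0 < t) :
    |L / t - expSeries (divisorSum c) t| ≤ M * expGap t :=
  le_of_tendsto' (tendsto_sum_mul_expGap hc hL ht).abs (abs_sum_mul_expGap_le h0 hM ht)

lemma abs_div_sub_expSeries_le' (hc : ∀ n, |c n| ≤ 1) (h0 : c 0 = 0)
    (hM : ∀ N, |∑ n ∈ Finset.range N, c n| ≤ M) (hL : HasDirichletSum c 1 L) (ht : 0 < t) :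
    |L / t - expSeries (divisorSum c) t| ≤ M :=
  (abs_div_sub_expSeries_le hc h0 hM hL ht).trans
    (mul_le_of_le_one_right ((abs_nonneg _).trans (hM 0)) (expGap_le_one ht))

lemma div_three_le_expSeries {r : ℕ → ℝ} (hr : ∀ n, |r n| ≤ n) (hr0 : ∀ n, 0 ≤ r n)
    (hsq : ∀ n ≠ 0, 1 ≤ r (n ^ 2)) {N : ℕ} (hN : 0 < N) :
    (N : ℝ) / 3 ≤ expSeries r (1 / N ^ 2) := by
  have hexp : (1 / 3 : ℝ) ≤ Real.exp (-1) := by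
    rw [Real.exp_neg, one_div]
    gcongr
    linarith [Real.exp_one_lt_d9]
  calc (N : ℝ) / 3 = ∑ m ∈ Finset.Icc 1 N, (1 / 3 : ℝ) := by simp; ring
    _ ≤ ∑ m ∈ Finset.Icc 1 N, r (m ^ 2) * Real.exp (-((m ^ 2 : ℕ) * (1 / N ^ 2))) := by
        refine Finset.sum_le_sum fun m hm ↦ ?_
        obtain ⟨hm1, hmN⟩ := Finset.mem_Icc.1 hm
        have hle : ((m ^ 2 : ℕ) : ℝ) * (1 / N ^ 2) ≤ 1 := by
          rw [mul_one_div, div_le_one (by positivity)]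
          exact_mod_cast Nat.pow_le_pow_left hmN 2
        calc (1 / 3 : ℝ) ≤ 1 * Real.exp (-1) := by rwa [one_mul]
          _ ≤ _ := by
            gcongr
            · exact hr0 _
            · exact hsq m (by lia)
    _ = ∑ n ∈ (Finset.Icc 1 N).image (· ^ 2), r n * Real.exp (-(n * (1 / N ^ 2))) := by
        rw [Finset.sum_image (Nat.pow_left_injective two_ne_zero).injOn]
    _ ≤ expSeries r (1 / N ^ 2) := sum_le_expSeries hr hr0 (by positivity) _

/-- Compare `expSeries (divisorSum c) t` with `L / t` at `t = N⁻²`, where the squares alone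
contribute a multiple of `N`. -/
lemma one_le_mul_of_hasDirichletSum (hc : ∀ n, |c n| ≤ 1) (h0 : c 0 = 0)
    (hM : ∀ N, |∑ n ∈ Finset.range N, c n| ≤ M) (hL : HasDirichletSum c 1 L)
    (hr0 : ∀ n, 0 ≤ divisorSum c n) (hsq : ∀ n ≠ 0, 1 ≤ divisorSum c (n ^ 2)) (hM1 : 1 ≤ M) :
    1 ≤ 42 * M * L := by
  set N := ⌈6 * M⌉₊
  have hN_ge : 6 * M ≤ N := Nat.le_ceil _
  have hN_le : (N : ℝ) ≤ 7 * M := by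
    linarith [Nat.ceil_lt_add_one (by linarith : 0 ≤ 6 * M)]
  have hN0 : (0 : ℝ) < N := by linarith
  have hlower := div_three_le_expSeries (abs_divisorSum_le_self hc) hr0 hsq (mod_cast hN0)
  have hupper := (abs_le.1 (abs_div_sub_expSeries_le' hc h0 hM hL
    (by positivity : (0 : ℝ) < 1 / N ^ 2))).1
  have hLN : 1 ≤ 6 * L * N := by
    rw [div_div_eq_mul_div, div_one] at hupper
    refine le_of_mul_le_mul_right ?_ hN0
    linarith
  have hL0 : 0 < L := by
    by_contra! h
    nlinarith
  calc 1 ≤ 6 * L * N := hLN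
    _ ≤ 6 * L * (7 * M) := by gcongr
    _ = 42 * M * L := by ring

end MeanValue

section Mellin

variable {β : ℝ}

lemma integrableOn_expGap_mul_rpow (hβ0 : 0 < β) (hβ1 : β < 1) :
    IntegrableOn (fun t ↦ expGap t * t ^ (β - 1)) (Set.Ioi 0) := by
  have hmeas : AEStronglyMeasurable (fun t ↦ expGap t * t ^ (β - 1))
      (volume.restrict (Set.Ioi 0)) :=
    (continuousOn_expGap.mul fun t ht ↦ (Real.continuousAt_rpow_const t _
      (Or.inl (Set.mem_Ioi.1 ht).ne')).continuousWithinAt).aestronglyMeasurable measurableSet_Ioi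
  have hnorm : ∀ t : ℝ, 0 < t → ‖expGap t * t ^ (β - 1)‖ = expGap t * t ^ (β - 1) := fun t ht ↦
    Real.norm_of_nonneg (mul_nonneg (expGap_nonneg ht) (Real.rpow_nonneg ht.le _))
  rw [← Set.Ioc_union_Ioi_eq_Ioi zero_le_one]
  refine IntegrableOn.union ?_ ?_
  · have hrpow : IntegrableOn (fun t : ℝ ↦ t ^ (β - 1)) (Set.Ioc 0 1) :=
      (intervalIntegrable_iff_integrableOn_Ioc_of_le zero_le_one).1
        (intervalIntegral.intervalIntegrable_rpow' (by linarith))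
    refine hrpow.mono' (hmeas.mono_set Set.Ioc_subset_Ioi_self) ?_
    filter_upwards [ae_restrict_mem measurableSet_Ioc] with t ht
    rw [hnorm t ht.1]
    exact mul_le_of_le_one_left (Real.rpow_nonneg ht.1.le _) (expGap_le_one ht.1)
  · refine (integrableOn_Ioi_rpow_of_lt (by linarith : β - 2 < -1) one_pos).mono'
      (hmeas.mono_set (Set.Ioi_subset_Ioi zero_le_one)) ?_
    filter_upwards [ae_restrict_mem measurableSet_Ioi] with t ht
    have ht0 : 0 < t := zero_lt_one.trans ht
    rw [hnorm t ht0, show β - 2 = -1 + (β - 1) by ring, Real.rpow_add ht0, Real.rpow_neg_one]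
    gcongr
    exact expGap_le_inv ht0

lemma expGap_mul_rpow_comp_mul {b t : ℝ} (hb : 0 < b) (ht : 0 < t) :
    expGap (b * t) * t ^ (β - 1) = b ^ (1 - β) * (expGap (b * t) * (b * t) ^ (β - 1)) := by
  have hone : b ^ (1 - β) * b ^ (β - 1) = 1 := by rw [← Real.rpow_add hb]; simp
  rw [Real.mul_rpow hb.le ht.le]
  linear_combination (-(expGap (b * t) * t ^ (β - 1))) * hone

lemma integrableOn_expGap_comp_mul {b : ℝ} (hb : 0 ≤ b) (hβ0 : 0 < β) (hβ1 : β < 1) :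
    IntegrableOn (fun t ↦ expGap (b * t) * t ^ (β - 1)) (Set.Ioi 0) := by
  rcases hb.eq_or_lt with rfl | hb
  · simp only [zero_mul, expGap_zero, integrableOn_zero]
  have h := integrableOn_expGap_mul_rpow hβ0 hβ1
  rw [← mul_zero b, ← integrableOn_Ioi_comp_mul_left_iff _ _ hb] at h
  exact IntegrableOn.congr_fun (h.const_mul (b ^ (1 - β)))
    (fun t ht ↦ (expGap_mul_rpow_comp_mul hb ht).symm) measurableSet_Ioi

lemma integral_expGap_comp_mul {b : ℝ} (hb : 0 ≤ b) (hβ0 : β ≠ 0) :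
    ∫ t in Set.Ioi 0, expGap (b * t) * t ^ (β - 1) =
      b ^ (-β) * ∫ t in Set.Ioi 0, expGap t * t ^ (β - 1) := by
  rcases hb.eq_or_lt with rfl | hb
  · simp only [zero_mul, expGap_zero, integral_zero, Real.zero_rpow (neg_ne_zero.2 hβ0)]
  rw [setIntegral_congr_fun measurableSet_Ioi
    (fun t ht ↦ expGap_mul_rpow_comp_mul (β := β) hb ht), integral_const_mul,
    integral_comp_mul_left_Ioi (fun u ↦ expGap u * u ^ (β - 1)) 0 hb, mul_zero, smul_eq_mul,
    ← mul_assoc, ← Real.rpow_neg_one b, ← Real.rpow_add hb]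
  ring_nf

variable {c : ℕ → ℝ} {M L : ℝ}

lemma integrableOn_sum_expGap_mul_rpow (c : ℕ → ℝ) (hβ0 : 0 < β) (hβ1 : β < 1) (N : ℕ) :
    IntegrableOn (fun t ↦ (∑ n ∈ Finset.range N, c n * expGap (n * t)) * t ^ (β - 1))
      (Set.Ioi 0) := by
  simp only [Finset.sum_mul, mul_assoc]
  exact integrable_finsetSum _ fun n _ ↦
    (integrableOn_expGap_comp_mul n.cast_nonneg hβ0 hβ1).const_mul _

lemma integral_sum_expGap_mul_rpow (c : ℕ → ℝ) (hβ0 : 0 < β) (hβ1 : β < 1) (N : ℕ) :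
    ∫ t in Set.Ioi 0, (∑ n ∈ Finset.range N, c n * expGap (n * t)) * t ^ (β - 1) =
      (∑ n ∈ Finset.range N, c n * (n : ℝ) ^ (-β)) *
        ∫ t in Set.Ioi 0, expGap t * t ^ (β - 1) := by
  simp only [Finset.sum_mul, mul_assoc]
  rw [integral_finsetSum _ fun n _ ↦
    (integrableOn_expGap_comp_mul n.cast_nonneg hβ0 hβ1).const_mul _]
  simp only [integral_const_mul, integral_expGap_comp_mul (Nat.cast_nonneg _) hβ0.ne']

lemma integrableOn_div_sub_expSeries_mul_rpow (hc : ∀ n, |c n| ≤ 1) (h0 : c 0 = 0)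
    (hM : ∀ N, |∑ n ∈ Finset.range N, c n| ≤ M) (hL : HasDirichletSum c 1 L)
    (hβ0 : 0 < β) (hβ1 : β < 1) :
    IntegrableOn (fun t ↦ (L / t - expSeries (divisorSum c) t) * t ^ (β - 1)) (Set.Ioi 0) := by
  have hmeas := aestronglyMeasurable_of_tendsto_ae atTop
    (f := fun N t ↦ (∑ n ∈ Finset.range N, c n * expGap (n * t)) * t ^ (β - 1))
    (fun N ↦ (integrableOn_sum_expGap_mul_rpow c hβ0 hβ1 N).aestronglyMeasurable) <| by
      filter_upwards [ae_restrict_mem measurableSet_Ioi] with t ht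
      exact (tendsto_sum_mul_expGap hc hL ht).mul_const _
  refine ((integrableOn_expGap_mul_rpow hβ0 hβ1).const_mul M).mono' hmeas ?_
  filter_upwards [ae_restrict_mem measurableSet_Ioi] with t ht
  have hpow := Real.rpow_nonneg (le_of_lt ht) (β - 1)
  rw [norm_mul, Real.norm_of_nonneg hpow, ← mul_assoc]
  gcongr
  exact abs_div_sub_expSeries_le hc h0 hM hL ht

lemma integral_div_sub_expSeries_mul_rpow (hc : ∀ n, |c n| ≤ 1) (h0 : c 0 = 0)
    (hM : ∀ N, |∑ n ∈ Finset.range N, c n| ≤ M) (hL : HasDirichletSum c 1 L)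
    (hβ0 : 0 < β) (hβ1 : β < 1) {Z : ℝ} (hZ : HasDirichletSum c β Z) :
    ∫ t in Set.Ioi 0, (L / t - expSeries (divisorSum c) t) * t ^ (β - 1) =
      Z * ∫ t in Set.Ioi 0, expGap t * t ^ (β - 1) := by
  have hlim := tendsto_integral_of_dominated_convergence
    (F := fun N t ↦ (∑ n ∈ Finset.range N, c n * expGap (n * t)) * t ^ (β - 1))
    (μ := volume.restrict (Set.Ioi 0)) (fun t ↦ M * (expGap t * t ^ (β - 1)))
    (fun N ↦ (integrableOn_sum_expGap_mul_rpow c hβ0 hβ1 N).aestronglyMeasurable)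
    ((integrableOn_expGap_mul_rpow hβ0 hβ1).const_mul M)
    (fun N ↦ by
      filter_upwards [ae_restrict_mem measurableSet_Ioi] with t ht
      have hpow := Real.rpow_nonneg (le_of_lt ht) (β - 1)
      rw [norm_mul, Real.norm_of_nonneg hpow, ← mul_assoc]
      gcongr
      exact abs_sum_mul_expGap_le h0 hM ht N)
    (by
      filter_upwards [ae_restrict_mem measurableSet_Ioi] with t ht
      exact (tendsto_sum_mul_expGap hc hL ht).mul_const _)
  simp only [integral_sum_expGap_mul_rpow c hβ0 hβ1] at hlim
  exact tendsto_nhds_unique hlim (hZ.mul_const _)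

end Mellin

section Primitive

variable {r : ℕ → ℝ}

lemma abs_div_natCast_le (hr : ∀ n, |r n| ≤ n) (n : ℕ) : |r n / n| ≤ n := by
  rcases n.eq_zero_or_pos with rfl | hn
  · simp
  · rw [abs_div, Nat.abs_cast]
    exact (div_le_one_of_le₀ (hr n) n.cast_nonneg).trans (mod_cast hn)

lemma hasDerivAt_expSeries_div (hr : ∀ n, |r n| ≤ n) {t : ℝ} (ht : 0 < t) :
    HasDerivAt (expSeries fun n ↦ r n / n) (-expSeries r t) t := by
  have hr_zero : r 0 = 0 := abs_nonpos_iff.1 (by simpa using hr 0)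
  have hterm : ∀ (n : ℕ) (y : ℝ), HasDerivAt (fun y : ℝ ↦ r n / n * Real.exp (-(n * y)))
      (-(r n * Real.exp (-(n * y)))) y := fun n y ↦ by
    refine ((((hasDerivAt_id' y).const_mul (n : ℝ)).fun_neg.exp).const_mul (r n / n)).congr_deriv ?_
    rcases n.eq_zero_or_pos with rfl | hn
    · simp [hr_zero]
    · field_simp
  rw [expSeries, ← tsum_neg]
  refine hasDerivAt_tsum_of_isPreconnected (t := Set.Ioi (t / 2)) (y₀ := t)
    (summable_expSeries hr (half_pos ht)).norm isOpen_Ioi isPreconnected_Ioi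
    (fun n y _ ↦ hterm n y) (fun n y hy ↦ ?_) (Set.mem_Ioi.2 (half_lt_self ht))
    (summable_expSeries (abs_div_natCast_le hr) ht) (Set.mem_Ioi.2 (half_lt_self ht))
  rw [norm_neg, norm_mul, norm_mul, Real.norm_of_nonneg (Real.exp_pos _).le,
    Real.norm_of_nonneg (Real.exp_pos _).le]
  gcongr
  exact le_of_lt hy

lemma expSeries_div_le_sum_add (hr : ∀ n, |r n| ≤ n) (hr0 : ∀ n, 0 ≤ r n) {s t : ℝ}
    (hs : 0 < s) (hst : s ≤ t) {Q : ℕ} (hQ : 0 < Q) :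
    expSeries (fun n ↦ r n / n) t ≤
      ∑ n ∈ Finset.range Q, r n / n + Real.exp (-(Q * (t - s))) / Q * expSeries r s := by
  have hhead : Summable fun n ↦ if n ∈ Finset.range Q then r n / n else 0 :=
    (hasSum_sum_of_ne_finset_zero fun n hn ↦ if_neg hn).summable
  have htail := (summable_expSeries hr hs).mul_left (Real.exp (-(Q * (t - s))) / Q)
  have hsplit :
      ∑ n ∈ Finset.range Q, r n / n = ∑' n, if n ∈ Finset.range Q then r n / n else 0 := by
    rw [tsum_eq_sum fun n hn ↦ if_neg hn, Finset.sum_ite_mem, Finset.inter_self]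
  rw [hsplit, expSeries, expSeries, ← tsum_mul_left, ← hhead.tsum_add htail]
  refine (summable_expSeries (abs_div_natCast_le hr) (hs.trans_le hst)).tsum_le_tsum
    (fun n ↦ ?_) (hhead.add htail)
  have hrn : 0 ≤ r n := hr0 n
  split_ifs with hn
  · have hexp : Real.exp (-(n * t)) ≤ 1 :=
      Real.exp_le_one_iff.2 (neg_nonpos.2 (mul_nonneg n.cast_nonneg (hs.trans_le hst).le))
    exact (mul_le_of_le_one_right (by positivity) hexp).trans
      (le_add_of_nonneg_right (by positivity))
  · have hQn : (Q : ℝ) ≤ n := by exact_mod_cast not_lt.1 (mt Finset.mem_range.2 hn)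
    calc r n / n * Real.exp (-(n * t))
        = r n / n * (Real.exp (-(n * (t - s))) * Real.exp (-(n * s))) := by
          rw [← Real.exp_add]; ring_nf
      _ ≤ r n / Q * (Real.exp (-(Q * (t - s))) * Real.exp (-(n * s))) := by
          gcongr
      _ = 0 + Real.exp (-(Q * (t - s))) / Q * (r n * Real.exp (-(n * s))) := by ring

lemma tendsto_expSeries_div_atTop (hr : ∀ n, |r n| ≤ n) (hr0 : ∀ n, 0 ≤ r n) :
    Tendsto (expSeries fun n ↦ r n / n) atTop (𝓝 0) := by
  have hlim : Tendsto (fun t ↦ Real.exp (-(t - 1)) * expSeries r 1) atTop (𝓝 0) := by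
    simpa [sub_eq_add_neg] using (Real.tendsto_exp_neg_atTop_nhds_zero.comp
      (tendsto_atTop_add_const_right _ (-1) tendsto_id)).mul_const (expSeries r 1)
  refine squeeze_zero' (.of_forall fun t ↦ expSeries_nonneg fun n ↦
    div_nonneg (hr0 n) n.cast_nonneg) ?_ hlim
  filter_upwards [eventually_ge_atTop 1] with t ht
  simpa using expSeries_div_le_sum_add hr hr0 one_pos ht one_pos

lemma integrableOn_expSeries_Ioi (hr : ∀ n, |r n| ≤ n) (hr0 : ∀ n, 0 ≤ r n) {δ : ℝ}
    (hδ : 0 < δ) : IntegrableOn (expSeries r) (Set.Ioi δ) :=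
  integrable_neg_iff.1 <| integrableOn_Ioi_deriv_of_nonpos'
    (fun _ ht ↦ hasDerivAt_expSeries_div hr (hδ.trans_le ht))
    (fun _ _ ↦ neg_nonpos.2 (expSeries_nonneg hr0)) (tendsto_expSeries_div_atTop hr hr0)

lemma integral_expSeries_Ioi (hr : ∀ n, |r n| ≤ n) (hr0 : ∀ n, 0 ≤ r n) {δ : ℝ}
    (hδ : 0 < δ) : ∫ t in Set.Ioi δ, expSeries r t = expSeries (fun n ↦ r n / n) δ := by
  have h := integral_Ioi_of_hasDerivAt_of_nonpos'
    (fun _ ht ↦ hasDerivAt_expSeries_div hr (hδ.trans_le ht))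
    (fun _ _ ↦ neg_nonpos.2 (expSeries_nonneg hr0)) (tendsto_expSeries_div_atTop hr hr0)
  rwa [integral_neg, zero_sub, neg_inj] at h

end Primitive

section Zero

variable {c : ℕ → ℝ} {M L β δ : ℝ}

lemma integral_Ioc_div_sub_expSeries_ge (hc : ∀ n, |c n| ≤ 1) (h0 : c 0 = 0)
    (hM : ∀ N, |∑ n ∈ Finset.range N, c n| ≤ M) (hL : HasDirichletSum c 1 L)
    (hβ0 : 0 < β) (hβ1 : β < 1) (hδ : 0 < δ) :
    -(M * (δ ^ β / β)) ≤
      ∫ t in Set.Ioc 0 δ, (L / t - expSeries (divisorSum c) t) * t ^ (β - 1) := by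
  have hint : IntegrableOn (fun t : ℝ ↦ t ^ (β - 1)) (Set.Ioc 0 δ) :=
    (intervalIntegrable_iff_integrableOn_Ioc_of_le hδ.le).1
      (intervalIntegral.intervalIntegrable_rpow' (by linarith))
  have hval : ∫ t in Set.Ioc 0 δ, t ^ (β - 1) = δ ^ β / β := by
    rw [← intervalIntegral.integral_of_le hδ.le, integral_rpow (Or.inl (by linarith)),
      sub_add_cancel, Real.zero_rpow hβ0.ne', sub_zero]
  rw [← hval, ← neg_mul, ← integral_const_mul]
  refine setIntegral_mono_on (hint.const_mul _)
    ((integrableOn_div_sub_expSeries_mul_rpow hc h0 hM hL hβ0 hβ1).mono_set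
      Set.Ioc_subset_Ioi_self) measurableSet_Ioc fun t ht ↦ ?_
  have hpow := Real.rpow_nonneg ht.1.le (β - 1)
  gcongr
  exact (abs_le.1 (abs_div_sub_expSeries_le' hc h0 hM hL ht.1)).1

lemma integral_Ioi_div_sub_expSeries_ge (hc : ∀ n, |c n| ≤ 1) (h0 : c 0 = 0)
    (hM : ∀ N, |∑ n ∈ Finset.range N, c n| ≤ M) (hL : HasDirichletSum c 1 L)
    (hr0 : ∀ n, 0 ≤ divisorSum c n) (hβ0 : 0 < β) (hβ1 : β < 1) (hδ : 0 < δ) :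
    δ ^ (β - 1) * (L / (1 - β) - expSeries (fun n ↦ divisorSum c n / n) δ) ≤
      ∫ t in Set.Ioi δ, (L / t - expSeries (divisorSum c) t) * t ^ (β - 1) := by
  have hr := abs_divisorSum_le_self hc
  have hpow : IntegrableOn (fun t : ℝ ↦ t ^ (β - 2)) (Set.Ioi δ) :=
    integrableOn_Ioi_rpow_of_lt (by linarith) hδ
  have hpow_val : ∫ t in Set.Ioi δ, t ^ (β - 2) = δ ^ (β - 1) / (1 - β) := by
    rw [integral_Ioi_rpow_of_lt (by linarith) hδ, show β - 2 + 1 = β - 1 by ring, neg_div,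
      ← div_neg, neg_sub]
  have hf := integrableOn_expSeries_Ioi hr hr0 hδ
  calc δ ^ (β - 1) * (L / (1 - β) - expSeries (fun n ↦ divisorSum c n / n) δ)
      = ∫ t in Set.Ioi δ, (L * t ^ (β - 2) - δ ^ (β - 1) * expSeries (divisorSum c) t) := by
        rw [integral_sub (hpow.const_mul L) (hf.const_mul _), integral_const_mul,
          integral_const_mul, hpow_val, integral_expSeries_Ioi hr hr0 hδ]
        ring
    _ ≤ _ := by
        refine setIntegral_mono_on ((hpow.const_mul L).sub (hf.const_mul _))
          ((integrableOn_div_sub_expSeries_mul_rpow hc h0 hM hL hβ0 hβ1).mono_set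
            (Set.Ioi_subset_Ioi hδ.le)) measurableSet_Ioi fun t ht ↦ ?_
        have ht0 : 0 < t := hδ.trans ht
        have hpow_le : t ^ (β - 1) ≤ δ ^ (β - 1) :=
          Real.rpow_le_rpow_of_nonpos hδ (le_of_lt ht) (by linarith)
        have hpow_eq : L / t * t ^ (β - 1) = L * t ^ (β - 2) := by
          rw [show β - 2 = β - 1 - 1 by ring, Real.rpow_sub_one ht0.ne' (β - 1),
            div_mul_eq_mul_div, mul_div_assoc]
        rw [sub_mul, hpow_eq, mul_comm (expSeries _ t)]
        gcongr
        exact expSeries_nonneg hr0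

/-- A zero at `β` makes the Mellin transform of `L / t - expSeries (divisorSum c) t` vanish at
`β`; split that integral at `δ`. -/
lemma div_one_sub_le_expSeries_add (hc : ∀ n, |c n| ≤ 1) (h0 : c 0 = 0)
    (hM : ∀ N, |∑ n ∈ Finset.range N, c n| ≤ M) (hL : HasDirichletSum c 1 L)
    (hr0 : ∀ n, 0 ≤ divisorSum c n) (hβ0 : 0 < β) (hβ1 : β < 1) (hz : HasDirichletSum c β 0)
    (hδ : 0 < δ) :
    L / (1 - β) ≤ expSeries (fun n ↦ divisorSum c n / n) δ + M * δ / β := by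
  have hint := integrableOn_div_sub_expSeries_mul_rpow hc h0 hM hL hβ0 hβ1
  have hzero := integral_div_sub_expSeries_mul_rpow hc h0 hM hL hβ0 hβ1 hz
  rw [zero_mul, ← Set.Ioc_union_Ioi_eq_Ioi hδ.le, setIntegral_union
    (Set.Ioc_disjoint_Ioi le_rfl) measurableSet_Ioi (hint.mono_set Set.Ioc_subset_Ioi_self)
    (hint.mono_set (Set.Ioi_subset_Ioi hδ.le))] at hzero
  have hnear := integral_Ioc_div_sub_expSeries_ge hc h0 hM hL hβ0 hβ1 hδ
  have hfar := integral_Ioi_div_sub_expSeries_ge hc h0 hM hL hr0 hβ0 hβ1 hδ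
  have hpow : δ ^ β = δ ^ (β - 1) * δ := by rw [← Real.rpow_add_one hδ.ne', sub_add_cancel]
  rw [hpow] at hnear
  refine le_of_mul_le_mul_left ?_ (Real.rpow_pos_of_pos hδ (β - 1))
  linear_combination hnear + hfar + hzero

lemma expSeries_div_sub_le (hc : ∀ n, |c n| ≤ 1) (h0 : c 0 = 0)
    (hM : ∀ N, |∑ n ∈ Finset.range N, c n| ≤ M) (hL : HasDirichletSum c 1 L)
    {a b : ℝ} (ha : 0 < a) (hab : a ≤ b) :
    expSeries (fun n ↦ divisorSum c n / n) a - expSeries (fun n ↦ divisorSum c n / n) b ≤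
      L * (Real.log b - Real.log a) + M * (b - a) := by
  have hderiv : ∀ t : ℝ, 0 < t → HasDerivAt
      (fun t ↦ L * Real.log t + M * t + expSeries (fun n ↦ divisorSum c n / n) t)
      (L * t⁻¹ + M * 1 + -expSeries (divisorSum c) t) t := fun t ht ↦
    (((Real.hasDerivAt_log ht.ne').const_mul L).add ((hasDerivAt_id' t).const_mul M)).add
      (hasDerivAt_expSeries_div (abs_divisorSum_le_self hc) ht)
  have hmono : MonotoneOn
      (fun t ↦ L * Real.log t + M * t + expSeries (fun n ↦ divisorSum c n / n) t)
      (Set.Ioi 0) := by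
    refine monotoneOn_of_deriv_nonneg (convex_Ioi 0)
      (fun t ht ↦ (hderiv t ht).continuousAt.continuousWithinAt) (fun t ht ↦ ?_) (fun t ht ↦ ?_) <;>
      rw [interior_Ioi] at ht
    · exact (hderiv t ht).differentiableAt.differentiableWithinAt
    · rw [(hderiv t ht).deriv, ← div_eq_mul_inv]
      linarith [(abs_le.1 (abs_div_sub_expSeries_le' hc h0 hM hL ht)).1]
  linarith [hmono (Set.mem_Ioi.2 ha) (Set.mem_Ioi.2 (ha.trans_le hab)) hab]

end Zero

section PrimeSum

lemma sum_mul_exp_sub_exp_le {r : ℕ → ℝ} (hr : ∀ n, |r n| ≤ n) (hr0 : ∀ n, 0 ≤ r n) {a b : ℝ}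
    (ha : 0 < a) (hab : a ≤ b) (S : Finset ℕ) :
    ∑ m ∈ S, r m * (Real.exp (-(m * a)) - Real.exp (-(m * b))) ≤
      expSeries r a - expSeries r b := by
  have hsa := summable_expSeries hr ha
  have hsb := summable_expSeries hr (ha.trans_le hab)
  calc ∑ m ∈ S, r m * (Real.exp (-(m * a)) - Real.exp (-(m * b)))
      = ∑ m ∈ S, (r m * Real.exp (-(m * a)) - r m * Real.exp (-(m * b))) := by
        simp only [mul_sub]
    _ ≤ ∑' m, (r m * Real.exp (-(m * a)) - r m * Real.exp (-(m * b))) := by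
        refine (hsa.sub hsb).sum_le_tsum S fun m _ ↦ ?_
        have hrm := hr0 m
        rw [sub_nonneg]
        gcongr
    _ = expSeries r a - expSeries r b := hsa.tsum_sub hsb

lemma exp_neg_two_le : Real.exp (-2) ≤ 1 / 4 := by
  rw [Real.exp_neg, ← one_div]
  gcongr
  calc (4 : ℝ) = (1 + 1) ^ 2 := by norm_num
    _ ≤ Real.exp 1 ^ 2 := by gcongr; exact Real.add_one_le_exp 1
    _ = Real.exp 2 := by rw [← Real.exp_nat_mul]; norm_num

lemma le_exp_neg_sub_exp_neg {u v : ℝ} (hu : u ≤ 1 / 8) (hv : 4 ≤ v) :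
    13 / 16 ≤ Real.exp (-u) - Real.exp (-v) := by
  have hexp : Real.exp (-v) ≤ 1 / 16 := calc
    Real.exp (-v) ≤ Real.exp (-2 + -2) := by gcongr; linarith
    _ = Real.exp (-2) * Real.exp (-2) := Real.exp_add _ _
    _ ≤ 1 / 4 * (1 / 4) := by gcongr <;> exact exp_neg_two_le
    _ = 1 / 16 := by norm_num
  linarith [Real.one_sub_le_exp_neg u]

section Bounds

variable {c : ℕ → ℝ} {M L β : ℝ} {Q : ℕ}

lemma div_one_sub_le_sum_divisorSum_div (hc : ∀ n, |c n| ≤ 1) (h0 : c 0 = 0)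
    (hM : ∀ N, |∑ n ∈ Finset.range N, c n| ≤ M) (hL : HasDirichletSum c 1 L)
    (hr0 : ∀ n, 0 ≤ divisorSum c n) (hL0 : 0 ≤ L) (hβ0 : 1 / 2 ≤ β) (hβ1 : β < 1)
    (hz : HasDirichletSum c β 0) (hQ : 0 < Q) (hMQ : M ≤ 1 / 1000 * L * Q) :
    9 / 10 * (L / (1 - β)) ≤ ∑ n ∈ Finset.range Q, divisorSum c n / n := by
  have hM0 : 0 ≤ M := (abs_nonneg _).trans (hM 0)
  have hQ0 : (0 : ℝ) < Q := by exact_mod_cast hQ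
  have hMQ' : M / Q ≤ 1 / 1000 * L := (div_le_iff₀ hQ0).2 hMQ
  have hmellin := div_one_sub_le_expSeries_add hc h0 hM hL hr0 (by linarith) hβ1 hz
    (div_pos four_pos hQ0)
  have htrunc := expSeries_div_le_sum_add (abs_divisorSum_le_self hc) hr0
    (div_pos two_pos hQ0) (by gcongr; norm_num : (2 : ℝ) / Q ≤ 4 / Q) hQ
  have htail : Real.exp (-(Q * (4 / Q - 2 / Q))) / Q * expSeries (divisorSum c) (2 / Q) ≤
      1 / 4 * (L / 2 + M / Q) := by
    have hf := (abs_le.1 (abs_div_sub_expSeries_le' hc h0 hM hL (div_pos two_pos hQ0))).1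
    rw [show L / (2 / (Q : ℝ)) = Q * (L / 2) by field_simp] at hf
    calc Real.exp (-(Q * (4 / Q - 2 / Q))) / Q * expSeries (divisorSum c) (2 / Q)
        = Real.exp (-2) / Q * expSeries (divisorSum c) (2 / Q) := by
          congr 3
          field_simp
          norm_num
      _ ≤ 1 / 4 / Q * (Q * (L / 2) + M) := by
          gcongr
          · exact expSeries_nonneg hr0
          · exact exp_neg_two_le
          · linarith
      _ = 1 / 4 * (L / 2 + M / Q) := by field_simp
  have hMβ : M * (4 / Q) / β ≤ 8 * (M / Q) := by
    rw [div_le_iff₀ (by linarith), show M * (4 / Q) = 4 * (M / Q) by ring]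
    nlinarith [div_nonneg hM0 hQ0.le]
  have hLβ : L ≤ 1 / 2 * (L / (1 - β)) := by
    rw [mul_div_assoc', le_div_iff₀ (by linarith)]
    nlinarith
  linarith

lemma sum_divisorSum_div_le_log {x : ℝ} (hc : ∀ n, |c n| ≤ 1) (h0 : c 0 = 0)
    (hM : ∀ N, |∑ n ∈ Finset.range N, c n| ≤ M) (hL : HasDirichletSum c 1 L)
    (hr0 : ∀ n, 0 ≤ divisorSum c n) (hQ : 0 < Q) (hx : 1 ≤ x) {S : Finset ℕ}
    (hS : ∀ m ∈ S, (Q : ℝ) ≤ m ∧ m ≤ x * Q) :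
    13 / 16 * ∑ m ∈ S, divisorSum c m / m ≤ L * (Real.log x + Real.log 32) + 4 * (M / Q) := by
  have hM0 : 0 ≤ M := (abs_nonneg _).trans (hM 0)
  have hQ0 : (0 : ℝ) < Q := by exact_mod_cast hQ
  set a : ℝ := 1 / (8 * (x * Q)) with ha_def
  have ha : 0 < a := by positivity
  have hab : a ≤ 4 / Q := by
    rw [div_le_div_iff₀ (by positivity) (by positivity)]
    nlinarith
  have hexp : ∀ m ∈ S, (13 / 16 : ℝ) ≤ Real.exp (-(m * a)) - Real.exp (-(m * (4 / Q))) := by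
    intro m hm
    have hma : (m : ℝ) * a ≤ 1 / 8 := by
      rw [mul_one_div, div_le_div_iff₀ (by positivity) (by norm_num)]
      linarith [(hS m hm).2]
    have hmb : 4 ≤ (m : ℝ) * (4 / Q) := by
      rw [mul_div_assoc', le_div_iff₀ hQ0]
      linarith [(hS m hm).1]
    exact le_exp_neg_sub_exp_neg hma hmb
  have hlog : Real.log (4 / Q) - Real.log a = Real.log x + Real.log 32 := by
    rw [← Real.log_div (by positivity) ha.ne', ← Real.log_mul (by positivity) (by norm_num)]
    congr 1
    rw [ha_def]
    field_simp
    norm_num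
  have hr0' : ∀ n, 0 ≤ divisorSum c n / n := fun n ↦ div_nonneg (hr0 n) n.cast_nonneg
  calc 13 / 16 * ∑ m ∈ S, divisorSum c m / m
      = ∑ m ∈ S, divisorSum c m / m * (13 / 16) := by rw [mul_comm, Finset.sum_mul]
    _ ≤ ∑ m ∈ S, divisorSum c m / m * (Real.exp (-(m * a)) - Real.exp (-(m * (4 / Q)))) :=
        Finset.sum_le_sum fun m hm ↦ mul_le_mul_of_nonneg_left (hexp m hm) (hr0' m)
    _ ≤ _ := sum_mul_exp_sub_exp_le
        (abs_div_natCast_le (abs_divisorSum_le_self hc)) hr0' ha hab S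
    _ ≤ _ := expSeries_div_sub_le hc h0 hM hL ha hab
    _ ≤ L * (Real.log x + Real.log 32) + 4 * (M / Q) := by
        rw [hlog, show 4 * (M / Q) = M * (4 / Q) by ring]
        gcongr
        linarith

end Bounds

lemma injOn_mul_prime_lt {Q : ℕ} {P : Finset ℕ} (hP : ∀ p ∈ P, p.Prime ∧ Q ≤ p) :
    Set.InjOn (fun z : ℕ × ℕ ↦ z.1 * z.2) (P ×ˢ Finset.Ico 1 Q : Finset (ℕ × ℕ)) := by
  rintro ⟨p, n⟩ hpn ⟨r, m⟩ hrm heq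
  simp only [Finset.coe_product, Set.mem_prod, Finset.mem_coe, Finset.mem_Ico] at hpn hrm heq
  obtain ⟨hpP, -, -⟩ := hpn
  obtain ⟨hrP, hm1, hmQ⟩ := hrm
  obtain ⟨hp, hQp⟩ := hP p hpP
  have hpr : p = r := by
    rcases hp.dvd_mul.1 (heq ▸ dvd_mul_right p n) with hdvd | hdvd
    · exact (Nat.prime_dvd_prime_iff_eq hp (hP r hrP).1).1 hdvd
    · exact absurd (Nat.le_of_dvd hm1 hdvd) (hmQ.trans_le hQp).not_ge
  subst hpr
  rw [Nat.eq_of_mul_eq_mul_left hp.pos heq]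

variable {c : ℕ →*₀ ℝ}

lemma sum_prime_mul_sum_divisorSum {Q : ℕ} {P : Finset ℕ} (hP : ∀ p ∈ P, p.Prime ∧ Q ≤ p) :
    (∑ p ∈ P, (1 + c p) / p) * ∑ n ∈ Finset.Ico 1 Q, divisorSum c n / n =
      ∑ m ∈ (P ×ˢ Finset.Ico 1 Q).image (fun z : ℕ × ℕ ↦ z.1 * z.2), divisorSum c m / m := by
  rw [Finset.sum_image (injOn_mul_prime_lt hP), Finset.sum_mul_sum, Finset.sum_product]
  refine Finset.sum_congr rfl fun p hpP ↦ Finset.sum_congr rfl fun n hn ↦ ?_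
  obtain ⟨hn1, hnQ⟩ := Finset.mem_Ico.1 hn
  obtain ⟨hp, hQp⟩ := hP p hpP
  have hcop : p.Coprime n := hp.coprime_iff_not_dvd.2 fun hdvd ↦
    absurd (Nat.le_of_dvd hn1 hdvd) (hnQ.trans_le hQp).not_ge
  rw [divisorSum_mul hcop, divisorSum_prime hp, div_mul_div_comm, Nat.cast_mul]

lemma abs_le_one_of_eq_zero_or_one_or_neg_one {y : ℝ} (hy : y = 0 ∨ y = 1 ∨ y = -1) : |y| ≤ 1 := by
  rcases hy with rfl | rfl | rfl <;> norm_num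

lemma sum_prime_mul_sum_divisorSum_le {M L x : ℝ} {Q : ℕ} {P : Finset ℕ}
    (hc : ∀ n, c n = 0 ∨ c n = 1 ∨ c n = -1) (hM : ∀ N, |∑ n ∈ Finset.range N, c n| ≤ M)
    (hL : HasDirichletSum c 1 L) (hQ : 0 < Q) (hx : 1 ≤ x)
    (hP : ∀ p ∈ P, p.Prime ∧ Q ≤ p ∧ p ≤ x) :
    13 / 16 * ((∑ p ∈ P, (1 + c p) / p) * ∑ n ∈ Finset.range Q, divisorSum c n / n) ≤
      L * (Real.log x + Real.log 32) + 4 * (M / Q) := by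
  rw [Finset.range_eq_Ico, Finset.sum_eq_sum_Ico_succ_bot hQ, Nat.cast_zero, div_zero, zero_add,
    sum_prime_mul_sum_divisorSum fun p hp ↦ ⟨(hP p hp).1, (hP p hp).2.1⟩]
  refine sum_divisorSum_div_le_log (fun n ↦ abs_le_one_of_eq_zero_or_one_or_neg_one (hc n))
    (map_zero c) hM hL (divisorSum_nonneg hc) hQ hx ?_
  simp only [Finset.mem_image, Finset.mem_product, Finset.mem_Ico, Prod.exists]
  rintro m ⟨p, n, ⟨hpP, hn1, hnQ⟩, rfl⟩
  obtain ⟨-, hQp, hpx⟩ := hP p hpP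
  constructor
  · exact_mod_cast hQp.trans (Nat.le_mul_of_pos_right p hn1)
  · rw [Nat.cast_mul]
    gcongr

lemma sum_prime_le_of_hasDirichletSum_zero {M L β x : ℝ} {Q : ℕ} {P : Finset ℕ}
    (hc : ∀ n, c n = 0 ∨ c n = 1 ∨ c n = -1) (hM : ∀ N, |∑ n ∈ Finset.range N, c n| ≤ M)
    (hL : HasDirichletSum c 1 L) (hL0 : 0 < L) (hβ0 : 1 / 2 ≤ β) (hβ1 : β < 1)
    (hz : HasDirichletSum c β 0) (hQ : 0 < Q) (hMQ : M ≤ 1 / 1000 * L * Q) (hx : 1 ≤ x)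
    (hlog : 9 ≤ Real.log x) (hP : ∀ p ∈ P, p.Prime ∧ Q ≤ p ∧ p ≤ x) :
    ∑ p ∈ P, (1 + c p) / p ≤ 2 * (1 - β) * Real.log x := by
  have hc1 := fun n ↦ abs_le_one_of_eq_zero_or_one_or_neg_one (hc n)
  have hlower := div_one_sub_le_sum_divisorSum_div hc1 (map_zero c) hM hL (divisorSum_nonneg hc)
    hL0.le hβ0 hβ1 hz hQ hMQ
  have hupper := sum_prime_mul_sum_divisorSum_le hc hM hL hQ hx hP
  have hP0 : 0 ≤ ∑ p ∈ P, (1 + c p) / p := Finset.sum_nonneg fun p _ ↦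
    div_nonneg (by linarith [(abs_le.1 (hc1 p)).1]) p.cast_nonneg
  have hlog32 : Real.log 32 ≤ 3.5 := by
    rw [show (32 : ℝ) = 2 ^ 5 by norm_num, Real.log_pow]
    push_cast
    linarith [Real.log_two_lt_d9]
  have hMQ' : M / Q ≤ 1 / 1000 * L := (div_le_iff₀ (by exact_mod_cast hQ)).2 hMQ
  set σ := ∑ p ∈ P, (1 + c p) / p
  have hβ : 0 < 1 - β := sub_pos.2 hβ1
  have hmain : L * (117 / 160 * σ / (1 - β)) ≤ L * (Real.log x + 4) := calc
    L * (117 / 160 * σ / (1 - β)) = 13 / 16 * (σ * (9 / 10 * (L / (1 - β)))) := by ring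
    _ ≤ 13 / 16 * (σ * ∑ n ∈ Finset.range Q, divisorSum c n / n) := by gcongr
    _ ≤ L * (Real.log x + Real.log 32) + 4 * (M / Q) := hupper
    _ ≤ L * (Real.log x + 4) := by nlinarith
  have hσ := (div_le_iff₀ hβ).1 (le_of_mul_le_mul_left hmain hL0)
  nlinarith

end PrimeSum

section CharacterSum

open ZMod

variable {q : ℕ} [NeZero q]

lemma sum_zmod_eq_sum_range (f : ZMod q → ℝ) : ∑ k, f k = ∑ n ∈ Finset.range q, f n := by
  refine Finset.sum_bij' (fun k _ ↦ k.val) (fun n _ ↦ (n : ZMod q)) ?_ ?_ ?_ ?_ ?_ <;>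
    simp +contextual [ZMod.val_lt, Nat.mod_eq_of_lt]

lemma sum_norm_sq_dft (Φ : ZMod q → ℂ) : ∑ k, ‖𝓕 Φ k‖ ^ 2 = q * ∑ j, ‖Φ j‖ ^ 2 := by
  have hcomplex : ∑ k, 𝓕 Φ k * starRingEnd ℂ (𝓕 Φ k) = q * ∑ j, Φ j * starRingEnd ℂ (Φ j) := calc
    ∑ k, 𝓕 Φ k * starRingEnd ℂ (𝓕 Φ k)
        = ∑ k, ∑ j, starRingEnd ℂ (Φ j) * (stdAddChar (-(k * -j)) • 𝓕 Φ k) := by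
          refine Finset.sum_congr rfl fun k _ ↦ ?_
          rw [dft_apply Φ k, map_sum, Finset.mul_sum]
          refine Finset.sum_congr rfl fun j _ ↦ ?_
          rw [smul_eq_mul, map_mul, ← AddChar.map_neg_eq_conj, neg_neg, smul_eq_mul, mul_neg,
            neg_neg, mul_comm k j]
          ring
    _ = ∑ j, starRingEnd ℂ (Φ j) * 𝓕 (𝓕 Φ) (-j) := by
          rw [Finset.sum_comm]
          simp only [← Finset.mul_sum, ← dft_apply]
    _ = q * ∑ j, Φ j * starRingEnd ℂ (Φ j) := by
          rw [Finset.mul_sum]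
          refine Finset.sum_congr rfl fun j _ ↦ ?_
          rw [congrFun (dft_dft Φ) (-j), neg_neg, smul_eq_mul]
          ring
  simp only [Complex.mul_conj'] at hcomplex
  exact_mod_cast hcomplex

lemma sum_comp_mul_natCast_le {F : ZMod q → ℝ} (hF : ∀ k, 0 ≤ F k) {a : ℕ} (ha : 0 < a) :
    ∑ u, F (u * a) ≤ a * ∑ k, F k := by
  have hfiber : ∀ k ∈ Finset.univ.image (fun u : ZMod q ↦ u * a),
      (Finset.univ.filter fun u : ZMod q ↦ u * a = k).card ≤ a := fun k hk ↦ by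
    have hcard := AddMonoidHom.card_fiber_eq_of_mem_range (AddMonoidHom.mulRight (a : ZMod q))
      (x := k) (y := 0) (by simpa using hk) ⟨0, zero_mul _⟩
    have htorsion := IsAddCyclic.card_nsmul_eq_zero_le (α := ZMod q) ha
    simp only [AddMonoidHom.coe_mulRight] at hcard
    simp only [nsmul_eq_mul, mul_comm (a : ZMod q)] at htorsion
    exact hcard.trans_le htorsion
  rw [Finset.sum_comp, Finset.mul_sum]
  calc ∑ k ∈ Finset.univ.image (fun u : ZMod q ↦ u * a),
        (Finset.univ.filter fun u : ZMod q ↦ u * a = k).card • F k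
      ≤ ∑ k ∈ Finset.univ.image (fun u : ZMod q ↦ u * a), a * F k := by
        refine Finset.sum_le_sum fun k hk ↦ ?_
        rw [nsmul_eq_mul]
        exact mul_le_mul_of_nonneg_right (mod_cast hfiber k hk) (hF k)
    _ ≤ ∑ k, a * F k := Finset.sum_le_sum_of_subset_of_nonneg (Finset.subset_univ _)
        fun k _ _ ↦ mul_nonneg a.cast_nonneg (hF k)

lemma norm_dft_unit_mul (χ : DirichletCharacter ℂ q) (u : (ZMod q)ˣ) (a : ZMod q) :
    ‖𝓕 χ (u * a)‖ = ‖𝓕 χ a‖ := by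
  have hcomp := dft_comp_unitMul χ u⁻¹ a
  simp only [map_mul, dft_const_mul, inv_inv] at hcomp
  rw [← hcomp, norm_mul, χ.unit_norm_eq_one, one_mul]

lemma norm_dft_natCast_sq_le (χ : DirichletCharacter ℂ q) {a : ℕ} (ha : 0 < a) :
    ‖𝓕 χ a‖ ^ 2 ≤ q * a := by
  have hpos : 0 < ∑ j, ‖χ j‖ ^ 2 := Finset.sum_pos' (fun _ _ ↦ sq_nonneg _) ⟨1, by simp⟩
  refine le_of_mul_le_mul_left ?_ hpos
  calc (∑ u, ‖χ u‖ ^ 2) * ‖𝓕 χ a‖ ^ 2 ≤ ∑ u : ZMod q, ‖𝓕 χ (u * a)‖ ^ 2 := by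
        rw [Finset.sum_mul]
        refine Finset.sum_le_sum fun u _ ↦ ?_
        by_cases hu : IsUnit u
        · obtain ⟨u, rfl⟩ := hu
          rw [norm_dft_unit_mul, χ.unit_norm_eq_one, one_pow, one_mul]
        · rw [χ.map_nonunit hu, norm_zero, zero_pow two_ne_zero, zero_mul]
          positivity
    _ ≤ a * ∑ k, ‖𝓕 χ k‖ ^ 2 :=
        sum_comp_mul_natCast_le (F := fun k ↦ ‖𝓕 χ k‖ ^ 2) (fun _ ↦ sq_nonneg _) ha
    _ = (∑ u, ‖χ u‖ ^ 2) * (q * a) := by rw [sum_norm_sq_dft]; ring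

lemma sum_range_norm_dft_sq_le (χ : DirichletCharacter ℂ q) :
    ∑ n ∈ Finset.range q, ‖𝓕 χ n‖ ^ 2 ≤ (q : ℝ) ^ 2 := by
  rw [← sum_zmod_eq_sum_range fun k ↦ ‖𝓕 χ k‖ ^ 2, sum_norm_sq_dft, sq (q : ℝ)]
  gcongr
  calc ∑ j, ‖χ j‖ ^ 2 ≤ ∑ _j : ZMod q, (1 : ℝ) :=
        Finset.sum_le_sum fun j _ ↦ pow_le_one₀ (norm_nonneg _) (χ.norm_le_one j)
    _ = q := by simp [ZMod.card]

lemma four_mul_div_le_norm_stdAddChar_sub_one (k : ZMod q) :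
    4 * (k.valMinAbs.natAbs / q : ℝ) ≤ ‖stdAddChar k - 1‖ := by
  have hq : (0 : ℝ) < q := by exact_mod_cast NeZero.pos q
  set θ : ℝ := Real.pi * (k.valMinAbs / q)
  have hexp : stdAddChar k = Complex.exp (Complex.I * (2 * θ : ℝ)) := by
    conv_lhs => rw [← ZMod.coe_valMinAbs k, stdAddChar_coe]
    congr 1
    push_cast [θ]
    ring
  have hθ_abs : |θ| = Real.pi * (k.valMinAbs.natAbs / q) := by
    rw [abs_mul, abs_div, abs_of_pos Real.pi_pos, abs_of_pos hq, Nat.cast_natAbs, Int.cast_abs]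
  have hθ : |θ| ≤ Real.pi / 2 := by
    rw [hθ_abs, div_eq_mul_one_div Real.pi]
    refine mul_le_mul_of_nonneg_left ?_ Real.pi_pos.le
    rw [div_le_div_iff₀ hq two_pos, one_mul]
    exact_mod_cast (by have := natAbs_valMinAbs_le k; lia : k.valMinAbs.natAbs * 2 ≤ q)
  have hsin := Real.mul_abs_le_abs_sin hθ
  rw [hexp, Complex.norm_exp_I_mul_ofReal_sub_one, mul_div_cancel_left₀ θ two_ne_zero, norm_mul,
    Real.norm_two, Real.norm_eq_abs]
  rw [hθ_abs, ← mul_assoc, div_mul_cancel₀ _ Real.pi_ne_zero] at hsin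
  linarith

lemma norm_sum_stdAddChar_le {k : ZMod q} (hk : k ≠ 0) (N : ℕ) :
    ‖∑ n ∈ Finset.range N, stdAddChar (k * (n : ZMod q))‖ ≤ q / 2 * (k.valMinAbs.natAbs : ℝ)⁻¹ := by
  have hq : (0 : ℝ) < q := by exact_mod_cast NeZero.pos q
  have hk_pos : (0 : ℝ) < k.valMinAbs.natAbs := by
    exact_mod_cast Int.natAbs_pos.2 (mt (valMinAbs_eq_zero k).1 hk)
  have hne : stdAddChar k ≠ 1 := fun h ↦ hk (injective_stdAddChar (by simpa using h))
  have hpow : ∀ n : ℕ, stdAddChar (k * (n : ZMod q)) = stdAddChar k ^ n := fun n ↦ by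
    rw [mul_comm, ← nsmul_eq_mul, AddChar.map_nsmul_eq_pow]
  have hnum : ‖stdAddChar k ^ N - 1‖ ≤ 2 := by
    refine (norm_sub_le _ _).trans ?_
    rw [norm_pow, AddChar.norm_apply]
    norm_num
  simp only [hpow]
  rw [geom_sum_eq hne, norm_div]
  calc ‖stdAddChar k ^ N - 1‖ / ‖stdAddChar k - 1‖ ≤ 2 / (4 * (k.valMinAbs.natAbs / q)) := by
        gcongr
        exact four_mul_div_le_norm_stdAddChar_sub_one k
    _ = q / 2 * (k.valMinAbs.natAbs : ℝ)⁻¹ := by field_simp; norm_num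

lemma inv_natAbs_valMinAbs_le {k : ZMod q} (hk : k ≠ 0) :
    (k.valMinAbs.natAbs : ℝ)⁻¹ ≤ (k.val : ℝ)⁻¹ + ((-k).val : ℝ)⁻¹ := by
  rw [valMinAbs_natAbs_eq_min, ZMod.neg_val, if_neg hk]
  rcases min_choice k.val (q - k.val) with h | h <;> rw [h]
  · exact le_add_of_nonneg_right (by positivity)
  · exact le_add_of_nonneg_left (by positivity)

lemma norm_sum_character_le_sum_dft {χ : DirichletCharacter ℂ q} (hχ : χ ≠ 1) (N : ℕ) :
    ‖∑ n ∈ Finset.range N, χ n‖ ≤ ∑ n ∈ Finset.range q, ‖𝓕 χ n‖ * (n : ℝ)⁻¹ := by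
  have hq : (0 : ℝ) < q := by exact_mod_cast NeZero.pos q
  have hdft_zero : 𝓕 χ 0 = 0 := by rw [dft_apply_zero]; exact MulChar.sum_eq_zero_of_ne_one hχ
  have hinv : ∀ j : ZMod q, χ j = (q : ℂ)⁻¹ * ∑ k, stdAddChar (k * j) * 𝓕 χ k := fun j ↦ by
    simpa only [LinearEquiv.symm_apply_apply, smul_eq_mul] using invDFT_apply (𝓕 χ) j
  have hexpand : ∑ n ∈ Finset.range N, χ n =
      (q : ℂ)⁻¹ * ∑ k, (∑ n ∈ Finset.range N, stdAddChar (k * (n : ZMod q))) * 𝓕 χ k := by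
    simp only [Finset.sum_mul]
    rw [Finset.sum_comm, Finset.mul_sum]
    exact Finset.sum_congr rfl fun n _ ↦ hinv n
  have hneg : ∑ k, ‖𝓕 χ k‖ * ((-k).val : ℝ)⁻¹ = ∑ k, ‖𝓕 χ k‖ * (k.val : ℝ)⁻¹ :=
    Fintype.sum_equiv (Equiv.neg _) _ _ fun k ↦ by
      rw [Equiv.neg_apply, ← norm_dft_unit_mul χ (-1) k, Units.val_neg, Units.val_one, neg_one_mul]
  calc ‖∑ n ∈ Finset.range N, χ n‖
      ≤ (q : ℝ)⁻¹ * ∑ k, q / 2 * ((k.val : ℝ)⁻¹ + ((-k).val : ℝ)⁻¹) * ‖𝓕 χ k‖ := by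
        rw [hexpand, norm_mul, norm_inv, Complex.norm_natCast]
        gcongr
        refine (norm_sum_le _ _).trans (Finset.sum_le_sum fun k _ ↦ ?_)
        rw [norm_mul]
        by_cases hk : k = 0
        · rw [hk, hdft_zero, norm_zero, mul_zero, mul_zero]
        · gcongr
          exact (norm_sum_stdAddChar_le hk N).trans
            (mul_le_mul_of_nonneg_left (inv_natAbs_valMinAbs_le hk) (by positivity))
    _ = 1 / 2 * (∑ k, ‖𝓕 χ k‖ * (k.val : ℝ)⁻¹ + ∑ k, ‖𝓕 χ k‖ * ((-k).val : ℝ)⁻¹) := by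
        rw [← Finset.sum_add_distrib, Finset.mul_sum, Finset.mul_sum]
        refine Finset.sum_congr rfl fun k _ ↦ ?_
        field_simp
    _ = ∑ k, ‖𝓕 χ k‖ * (k.val : ℝ)⁻¹ := by rw [hneg]; ring
    _ = ∑ n ∈ Finset.range q, ‖𝓕 χ n‖ * (n : ℝ)⁻¹ := by
        rw [sum_zmod_eq_sum_range fun k ↦ ‖𝓕 χ k‖ * (k.val : ℝ)⁻¹]
        exact Finset.sum_congr rfl fun n hn ↦ by rw [ZMod.val_cast_of_lt (Finset.mem_range.1 hn)]

/-- A weak form of the Pólya–Vinogradov inequality, valid for imprimitive characters as well. -/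
lemma norm_sum_character_le {χ : DirichletCharacter ℂ q} (hχ : χ ≠ 1) (N K : ℕ) :
    ‖∑ n ∈ Finset.range N, χ n‖ ≤ K * √q + q * √(2 / (K + 1)) := by
  have hsmall : ∀ n ∈ Finset.range (K + 1), ‖𝓕 χ n‖ * (n : ℝ)⁻¹ ≤ if n = 0 then 0 else √q := by
    intro n _
    rcases Nat.eq_zero_or_pos n with rfl | hn
    · simp
    have hn1 : (1 : ℝ) ≤ n := by exact_mod_cast hn
    rw [if_neg hn.ne', ← div_eq_mul_inv, div_le_iff₀ (by positivity)]
    calc ‖𝓕 χ n‖ ≤ √(q * n) := Real.le_sqrt_of_sq_le (norm_dft_natCast_sq_le χ hn)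
      _ = √q * √n := Real.sqrt_mul q.cast_nonneg _
      _ ≤ √q * n := by
          gcongr
          exact Real.sqrt_le_iff.2 ⟨by positivity, by nlinarith⟩
  have hlarge : ∑ n ∈ Finset.Ioo K q, ‖𝓕 χ n‖ * (n : ℝ)⁻¹ ≤ q * √(2 / (K + 1)) := by
    refine (Real.sum_mul_le_sqrt_mul_sqrt _ _ _).trans ?_
    gcongr
    · refine Real.sqrt_le_iff.2 ⟨q.cast_nonneg, ?_⟩
      exact (Finset.sum_le_sum_of_subset_of_nonneg
        (fun n hn ↦ Finset.mem_range.2 (Finset.mem_Ioo.1 hn).2)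
        fun _ _ _ ↦ sq_nonneg _).trans (sum_range_norm_dft_sq_le χ)
    · simpa only [inv_pow] using sum_Ioo_inv_sq_le K q
  calc ‖∑ n ∈ Finset.range N, χ n‖ ≤ ∑ n ∈ Finset.range q, ‖𝓕 χ n‖ * (n : ℝ)⁻¹ :=
        norm_sum_character_le_sum_dft hχ N
    _ ≤ ∑ n ∈ Finset.range (K + 1) ∪ Finset.Ioo K q, ‖𝓕 χ n‖ * (n : ℝ)⁻¹ := by
        refine Finset.sum_le_sum_of_subset_of_nonneg (fun n hn ↦ ?_) fun _ _ _ ↦ by positivity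
        simp only [Finset.mem_union, Finset.mem_range, Finset.mem_Ioo] at hn ⊢
        lia
    _ = _ := Finset.sum_union (Finset.disjoint_left.2 fun n hn hn' ↦ by
        simp only [Finset.mem_range, Finset.mem_Ioo] at hn hn'
        lia)
    _ ≤ _ := by
        refine add_le_add ((Finset.sum_le_sum hsmall).trans ?_) hlarge
        rw [Finset.sum_range_succ']
        simp

lemma norm_sum_character_le_div {χ : DirichletCharacter ℂ q} (hχ : χ ≠ 1) (hq : 10 ^ 18 ≤ q)
    (N : ℕ) : ‖∑ n ∈ Finset.range N, χ n‖ ≤ q / 250 := by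
  have hq18 : (10 : ℝ) ^ 18 ≤ q := by exact_mod_cast hq
  have hsqrt : 10 ^ 9 ≤ √(q : ℝ) := Real.le_sqrt_of_sq_le (by linarith)
  have htail : √(2 / ((500000 : ℕ) + 1)) ≤ (1 / 500 : ℝ) :=
    Real.sqrt_le_iff.2 ⟨by norm_num, by norm_num⟩
  calc ‖∑ n ∈ Finset.range N, χ n‖ ≤ (500000 : ℕ) * √q + q * √(2 / ((500000 : ℕ) + 1)) :=
        norm_sum_character_le hχ N 500000
    _ ≤ (500000 : ℕ) * √q + q * (1 / 500) := by gcongr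
    _ ≤ q / 250 := by
        push_cast
        nlinarith [Real.sq_sqrt (Nat.cast_nonneg (α := ℝ) q)]

end CharacterSum

section AbelSum

/-- The Dirichlet series `∑ a n * n ^ (-s)` after one summation by parts; it converges absolutely
for `0 < s.re` as soon as the partial sums of `a` are bounded. -/
noncomputable def abelSum (a : ℕ → ℂ) (s : ℂ) : ℂ :=
  ∑' n : ℕ, (∑ k ∈ Finset.range (n + 2), a k) *
    (((n + 1 : ℕ) : ℂ) ^ (-s) - ((n + 2 : ℕ) : ℂ) ^ (-s))

variable {a : ℕ → ℂ} {M : ℝ} {s : ℂ}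

lemma sum_range_mul_cpow_neg_eq (h0 : a 0 = 0) (s : ℂ) (N : ℕ) :
    ∑ k ∈ Finset.range (N + 1), a k * (k : ℂ) ^ (-s) =
      (∑ k ∈ Finset.range (N + 1), a k) * ((N + 1 : ℕ) : ℂ) ^ (-s) +
        ∑ n ∈ Finset.range N, (∑ k ∈ Finset.range (n + 2), a k) *
          (((n + 1 : ℕ) : ℂ) ^ (-s) - ((n + 2 : ℕ) : ℂ) ^ (-s)) := by
  induction N with
  | zero => simp [h0]
  | succ N ih =>
    rw [Finset.sum_range_succ, ih, Finset.sum_range_succ a (N + 1),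
      Finset.sum_range_succ (fun n ↦ (∑ k ∈ Finset.range (n + 2), a k) * _) N,
      Finset.sum_range_succ a (N + 1)]
    ring

lemma norm_natCast_cpow_neg_sub_le (hs : 0 < s.re) (n : ℕ) :
    ‖((n + 1 : ℕ) : ℂ) ^ (-s) - ((n + 2 : ℕ) : ℂ) ^ (-s)‖ ≤
      ‖s‖ * ((n + 1 : ℕ) : ℝ) ^ (-s.re - 1) := by
  have hn : (0 : ℝ) < (n + 1 : ℕ) := by positivity
  have hs0 : -s ≠ 0 := neg_ne_zero.2 (Complex.ne_zero_of_re_pos hs)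
  have hderiv : ∀ x ∈ Set.Icc ((n + 1 : ℕ) : ℝ) (n + 2 : ℕ),
      HasDerivWithinAt (fun y : ℝ ↦ (y : ℂ) ^ (-s)) (-s * (x : ℂ) ^ (-s - 1))
        (Set.Icc ((n + 1 : ℕ) : ℝ) (n + 2 : ℕ)) x := fun x hx ↦
    (hasDerivAt_ofReal_cpow_const (hn.trans_le hx.1).ne' hs0).hasDerivWithinAt
  have hmvt := norm_image_sub_le_of_norm_deriv_le_segment' hderiv
    (C := ‖s‖ * ((n + 1 : ℕ) : ℝ) ^ (-s.re - 1)) (fun x hx ↦ ?_) (n + 2 : ℕ)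
    (Set.right_mem_Icc.2 (by gcongr; norm_num))
  · rw [norm_sub_rev]
    refine hmvt.trans_eq ?_
    push_cast
    ring
  · rw [norm_mul, norm_neg, Complex.norm_cpow_eq_rpow_re_of_pos (hn.trans_le hx.1)]
    simp only [Complex.sub_re, Complex.neg_re, Complex.one_re]
    gcongr ‖s‖ * ?_
    exact Real.rpow_le_rpow_of_nonpos hn hx.1 (by linarith)

lemma norm_abelSum_term_le (hM : ∀ N, ‖∑ k ∈ Finset.range N, a k‖ ≤ M) (hs : 0 < s.re) (n : ℕ) :
    ‖(∑ k ∈ Finset.range (n + 2), a k) *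
      (((n + 1 : ℕ) : ℂ) ^ (-s) - ((n + 2 : ℕ) : ℂ) ^ (-s))‖ ≤
      M * (‖s‖ * ((n + 1 : ℕ) : ℝ) ^ (-s.re - 1)) := by
  rw [norm_mul]
  exact mul_le_mul (hM _) (norm_natCast_cpow_neg_sub_le hs n) (norm_nonneg _)
    ((norm_nonneg _).trans (hM 0))

lemma summable_natCast_succ_rpow {σ : ℝ} (hσ : 0 < σ) :
    Summable fun n : ℕ ↦ ((n + 1 : ℕ) : ℝ) ^ (-σ - 1) :=
  (summable_nat_add_iff 1).2 (Real.summable_nat_rpow.2 (by linarith))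

lemma differentiableOn_abelSum (hM : ∀ N, ‖∑ k ∈ Finset.range N, a k‖ ≤ M) :
    DifferentiableOn ℂ (abelSum a) {s | 0 < s.re} := by
  intro s hs
  have hM0 : 0 ≤ M := (norm_nonneg _).trans (hM 0)
  set U : Set ℂ := {z | s.re / 2 < z.re} ∩ Metric.ball 0 (‖s‖ + 1)
  have hU : IsOpen U := (isOpen_lt continuous_const Complex.continuous_re).inter Metric.isOpen_ball
  have hsU : s ∈ U := ⟨half_lt_self (show 0 < s.re from hs), by simp⟩
  have hdiff : DifferentiableOn ℂ (abelSum a) U := by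
    refine Complex.differentiableOn_tsum_of_summable_norm
      (((summable_natCast_succ_rpow (half_pos hs)).mul_left (‖s‖ + 1)).mul_left M)
      (fun n ↦ ?_) hU fun n z hz ↦ ?_
    · have hcpow : ∀ m : ℕ, m ≠ 0 → Differentiable ℂ fun z : ℂ ↦ (m : ℂ) ^ (-z) := fun m hm ↦
        differentiable_neg.const_cpow (Or.inl (Nat.cast_ne_zero.2 hm))
      exact (((hcpow _ n.succ_ne_zero).sub (hcpow _ (n + 1).succ_ne_zero)).const_mul
        _).differentiableOn
    · refine (norm_abelSum_term_le hM ((half_pos hs).trans hz.1) n).trans ?_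
      have hz_norm : ‖z‖ ≤ ‖s‖ + 1 := (mem_ball_zero_iff.1 hz.2).le
      gcongr 2
      exact Real.rpow_le_rpow_of_exponent_le (by simp) (by linarith [hz.1.out])
  exact (hdiff.differentiableAt (hU.mem_nhds hsU)).differentiableWithinAt

lemma tendsto_sum_mul_cpow_neg (h0 : a 0 = 0) (hM : ∀ N, ‖∑ k ∈ Finset.range N, a k‖ ≤ M)
    (hs : 0 < s.re) :
    Tendsto (fun N ↦ ∑ k ∈ Finset.range N, a k * (k : ℂ) ^ (-s)) atTop (𝓝 (abelSum a s)) := by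
  refine (tendsto_add_atTop_iff_nat 1).1 ?_
  simp only [sum_range_mul_cpow_neg_eq h0]
  have hboundary : Tendsto (fun N : ℕ ↦ (∑ k ∈ Finset.range (N + 1), a k) *
      ((N + 1 : ℕ) : ℂ) ^ (-s)) atTop (𝓝 0) := by
    have hlim := (((tendsto_rpow_neg_atTop hs).comp tendsto_natCast_atTop_atTop).comp
      (tendsto_add_atTop_nat 1)).const_mul M
    rw [mul_zero] at hlim
    refine squeeze_zero_norm (fun N ↦ ?_) hlim
    rw [norm_mul, Complex.norm_natCast_cpow_of_pos N.succ_pos, Complex.neg_re]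
    exact mul_le_mul_of_nonneg_right (hM _) (by positivity)
  have hseries : Summable fun n : ℕ ↦ (∑ k ∈ Finset.range (n + 2), a k) *
      (((n + 1 : ℕ) : ℂ) ^ (-s) - ((n + 2 : ℕ) : ℂ) ^ (-s)) :=
    .of_norm_bounded (((summable_natCast_succ_rpow hs).mul_left ‖s‖).mul_left M)
      (norm_abelSum_term_le hM hs)
  simpa only [zero_add, abelSum] using hboundary.add hseries.hasSum.tendsto_sum_nat

end AbelSum

section LFunction

variable {q : ℕ} [NeZero q] {χ : DirichletCharacter ℂ q} {M : ℝ}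

lemma LFunction_eq_abelSum (hχ : χ ≠ 1) (h0 : χ (0 : ℕ) = 0)
    (hM : ∀ N, ‖∑ n ∈ Finset.range N, χ n‖ ≤ M) {s : ℂ} (hs : 0 < s.re) :
    χ.LFunction s = abelSum (fun n ↦ χ n) s := by
  have hopen : ∀ σ : ℝ, IsOpen {z : ℂ | σ < z.re} := fun σ ↦
    isOpen_lt continuous_const Complex.continuous_re
  have hL : AnalyticOnNhd ℂ χ.LFunction {z | 0 < z.re} :=
    (DirichletCharacter.differentiable_LFunction hχ).differentiableOn.analyticOnNhd (hopen 0)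
  refine hL.eqOn_of_preconnected_of_eventuallyEq
    ((differentiableOn_abelSum hM).analyticOnNhd (hopen 0))
    (convex_halfSpace_re_gt 0).isPreconnected (z₀ := 2) (by simp) ?_ hs
  filter_upwards [(hopen 1).mem_nhds (by simp : (2 : ℂ) ∈ {z : ℂ | 1 < z.re})] with z hz
  rw [DirichletCharacter.LFunction_eq_LSeries χ hz]
  refine tendsto_nhds_unique (χ.LSeriesSummable_of_one_lt_re hz).hasSum.tendsto_sum_nat ?_
  refine (tendsto_sum_mul_cpow_neg h0 hM (zero_lt_one.trans hz)).congr fun N ↦ ?_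
  exact Finset.sum_congr rfl fun n _ ↦ (LSeries.term_def₀ (f := fun n : ℕ ↦ χ n) h0 z n).symm

lemma hasDirichletSum_re_LFunction (hχ : χ ≠ 1) (h0 : χ (0 : ℕ) = 0)
    (hM : ∀ N, ‖∑ n ∈ Finset.range N, χ n‖ ≤ M) {s : ℝ} (hs : 0 < s) :
    HasDirichletSum (fun n ↦ (χ n).re) s (χ.LFunction s).re := by
  have hs' : 0 < (s : ℂ).re := by rwa [Complex.ofReal_re]
  have hlim := tendsto_sum_mul_cpow_neg h0 hM hs'
  rw [← LFunction_eq_abelSum hχ h0 hM hs'] at hlim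
  refine ((Complex.continuous_re.tendsto _).comp hlim).congr fun N ↦ ?_
  rw [Function.comp_apply, Complex.re_sum]
  refine Finset.sum_congr rfl fun n _ ↦ ?_
  rw [← Complex.ofReal_natCast n, ← Complex.ofReal_neg, ← Complex.ofReal_cpow n.cast_nonneg,
    Complex.re_mul_ofReal]

end LFunction

/-- Each term `2 / p` is at most `1 / p + 1 / (p - 1)`, and these are distinct terms of the harmonic
sum. -/
lemma two_mul_sum_odd_inv_le_log {x : ℝ} (hx : 1 ≤ x) {P : Finset ℕ}
    (hP : ∀ p ∈ P, Odd p ∧ 3 ≤ p ∧ p ≤ x) : ∑ p ∈ P, 2 * (p : ℝ)⁻¹ ≤ Real.log x := by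
  have hdisj : Disjoint P (P.image (· - 1)) := by
    refine Finset.disjoint_left.2 fun n hn hn' ↦ ?_
    obtain ⟨p, hp, rfl⟩ := Finset.mem_image.1 hn'
    exact Nat.not_even_iff_odd.2 (hP _ hn).1 ((hP p hp).1.tsub_odd odd_one)
  have hinj : Set.InjOn (· - 1) (P : Set ℕ) := fun a ha b hb (hab : a - 1 = b - 1) ↦ by
    have := (hP a ha).2.1
    have := (hP b hb).2.1
    lia
  have hsub : P ∪ P.image (· - 1) ⊆ Finset.Icc 2 ⌊x⌋₊ := by
    have hfloor : ∀ p ∈ P, 3 ≤ p ∧ p ≤ ⌊x⌋₊ := fun p hp ↦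
      ⟨(hP p hp).2.1, Nat.le_floor (hP p hp).2.2⟩
    refine Finset.union_subset (fun p hp ↦ ?_) (Finset.image_subset_iff.2 fun p hp ↦ ?_) <;>
    · have := hfloor p hp
      rw [Finset.mem_Icc]
      lia
  have hharmonic : ∑ n ∈ Finset.Icc 2 ⌊x⌋₊, (n : ℝ)⁻¹ ≤ Real.log x := by
    have hle := harmonic_floor_le_one_add_log x hx
    rw [harmonic_eq_sum_Icc, Finset.Icc_eq_cons_Ioc ((Nat.one_le_floor_iff x).2 hx),
      Finset.sum_cons, ← Finset.Icc_add_one_left_eq_Ioc] at hle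
    push_cast at hle
    linarith
  calc ∑ p ∈ P, 2 * (p : ℝ)⁻¹ ≤ ∑ p ∈ P, ((p : ℝ)⁻¹ + ((p - 1 : ℕ) : ℝ)⁻¹) := by
        refine Finset.sum_le_sum fun p hp ↦ ?_
        rw [two_mul]
        have := (hP p hp).2.1
        gcongr
        · exact_mod_cast (by lia : 0 < p - 1)
        · lia
    _ = ∑ n ∈ P ∪ P.image (· - 1), (n : ℝ)⁻¹ := by
        rw [Finset.sum_union hdisj, Finset.sum_image hinj, Finset.sum_add_distrib]
    _ ≤ ∑ n ∈ Finset.Icc 2 ⌊x⌋₊, (n : ℝ)⁻¹ :=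
        Finset.sum_le_sum_of_subset_of_nonneg hsub fun _ _ _ ↦ by positivity
    _ ≤ Real.log x := hharmonic

section RealCharacter

variable {q : ℕ} {χ : DirichletCharacter ℂ q}

section RealCoeff

variable [Nontrivial (ZMod q)]

/-- The values of a real Dirichlet character on the natural numbers, as a completely multiplicative
real function. -/
noncomputable def realCoeff (χ : DirichletCharacter ℂ q) (hχ : ∀ n : ZMod q, (χ n).im = 0) :
    ℕ →*₀ ℝ where
  toFun n := (χ n).re
  map_zero' := by rw [Nat.cast_zero, χ.map_nonunit not_isUnit_zero, Complex.zero_re]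
  map_one' := by simp
  map_mul' m n := by simp [hχ]

lemma realCoeff_eq_zero_or_one_or_neg_one (hχ : ∀ n : ZMod q, (χ n).im = 0) (n : ℕ) :
    realCoeff χ hχ n = 0 ∨ realCoeff χ hχ n = 1 ∨ realCoeff χ hχ n = -1 := by
  change (χ n).re = 0 ∨ (χ n).re = 1 ∨ (χ n).re = -1
  by_cases hn : IsUnit (n : ZMod q)
  · obtain ⟨u, hu⟩ := hn
    have hnorm : |(χ n).re| = 1 := by
      rw [Complex.abs_re_eq_norm.2 (hχ n), ← hu, χ.unit_norm_eq_one u]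
    exact Or.inr (eq_or_eq_neg_of_abs_eq hnorm)
  · exact Or.inl (by rw [χ.map_nonunit hn, Complex.zero_re])

lemma abs_sum_realCoeff_le (hχ : ∀ n : ZMod q, (χ n).im = 0) (N : ℕ) :
    |∑ n ∈ Finset.range N, realCoeff χ hχ n| ≤ ‖∑ n ∈ Finset.range N, χ n‖ := by
  refine le_of_eq_of_le ?_ (Complex.abs_re_le_norm _)
  rw [Complex.re_sum]
  rfl

end RealCoeff

lemma sum_prime_character_le_log {x : ℝ} (hx : 1 ≤ x) {P : Finset ℕ}
    (hP : ∀ p ∈ P, p.Prime ∧ 3 ≤ p ∧ p ≤ x) : ∑ p ∈ P, (1 + (χ p).re) / p ≤ Real.log x := calc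
  ∑ p ∈ P, (1 + (χ p).re) / p ≤ ∑ p ∈ P, 2 * (p : ℝ)⁻¹ := by
    refine Finset.sum_le_sum fun p _ ↦ ?_
    rw [div_eq_mul_inv]
    gcongr
    linarith [(Complex.re_le_norm (χ p)).trans (χ.norm_le_one p)]
  _ ≤ Real.log x := two_mul_sum_odd_inv_le_log hx fun p hp ↦
    ⟨(hP p hp).1.odd_of_ne_two (by have := (hP p hp).2.1; lia), (hP p hp).2⟩

lemma sum_prime_character_le_of_half_le [NeZero q] (hq : 10 ^ 18 ≤ q) (hχ1 : χ ≠ 1)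
    (hχ : ∀ n : ZMod q, (χ n).im = 0) {β : ℝ} (hβ0 : 1 / 2 ≤ β) (hβ1 : β < 1)
    (hβ : χ.LFunction β = 0) {x : ℝ} (hx : 1 ≤ x) (hlog : 9 ≤ Real.log x) {P : Finset ℕ}
    (hP : ∀ p ∈ P, p.Prime ∧ q ^ 2 ≤ p ∧ p ≤ x) :
    ∑ p ∈ P, (1 + (χ p).re) / p ≤ 2 * (1 - β) * Real.log x := by
  have : Fact (1 < q) := ⟨by lia⟩
  have hc := realCoeff_eq_zero_or_one_or_neg_one hχ
  have hχ0 : χ (0 : ℕ) = 0 := by rw [Nat.cast_zero, χ.map_nonunit not_isUnit_zero]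
  have hM := norm_sum_character_le_div hχ1 hq
  have hM' : ∀ N, |∑ n ∈ Finset.range N, realCoeff χ hχ n| ≤ (q : ℝ) / 250 := fun N ↦
    (abs_sum_realCoeff_le hχ N).trans (hM N)
  have hsum : ∀ s : ℝ, 0 < s → HasDirichletSum (realCoeff χ hχ) s (χ.LFunction s).re :=
    fun s hs ↦ hasDirichletSum_re_LFunction hχ1 hχ0 hM hs
  have hL := hsum 1 one_pos
  have hz : HasDirichletSum (realCoeff χ hχ) β 0 := by
    simpa only [hβ, Complex.zero_re] using hsum β (by linarith)
  set L := (χ.LFunction (1 : ℝ)).re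
  have hq18 : (10 : ℝ) ^ 18 ≤ q := by exact_mod_cast hq
  have hL1 : 1 ≤ 42 * ((q : ℝ) / 250) * L :=
    one_le_mul_of_hasDirichletSum (fun n ↦ abs_le_one_of_eq_zero_or_one_or_neg_one (hc n))
      (map_zero _) hM' hL (divisorSum_nonneg hc) (fun _ hn ↦ one_le_divisorSum_sq hc hn)
      (by linarith)
  have hL0 : 0 < L := pos_of_mul_pos_right (one_pos.trans_le hL1) (by positivity)
  have hML : (q : ℝ) / 250 ≤ 1 / 1000 * L * (q ^ 2 : ℕ) := by
    push_cast
    nlinarith [mul_le_mul_of_nonneg_left hL1 (by positivity : 0 ≤ (q : ℝ) / 250),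
      mul_nonneg hL0.le (sq_nonneg (q : ℝ))]
  exact sum_prime_le_of_hasDirichletSum_zero hc hM' hL hL0 hβ0 hβ1 hz (pow_pos (NeZero.pos q) 2)
    hML hx hlog hP

lemma nine_le_log {x : ℝ} (hx : 3 ^ 9 ≤ x) : 9 ≤ Real.log x := by
  rw [Real.le_log_iff_exp_le (by linarith)]
  calc Real.exp 9 = Real.exp 1 ^ 9 := by rw [← Real.exp_nat_mul]; norm_num
    _ ≤ 3 ^ 9 := by gcongr; exact Real.exp_one_lt_three.le
    _ ≤ x := hx

lemma sum_prime_character_le [NeZero q] (hq : 10 ^ 18 ≤ q) (hχ1 : χ ≠ 1)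
    (hχ : ∀ n : ZMod q, (χ n).im = 0) {β : ℝ} (hβ : χ.LFunction β = 0) {x : ℝ}
    (hx : (q : ℝ) ^ 2 ≤ x) {P : Finset ℕ} (hP : ∀ p ∈ P, p.Prime ∧ (q : ℝ) ^ 2 ≤ p ∧ p ≤ x) :
    ∑ p ∈ P, (1 + (χ p).re) / p ≤ 2 * (1 - β) * Real.log x := by
  have hβ1 : β < 1 := by
    by_contra! h
    exact χ.LFunction_ne_zero_of_one_le_re (Or.inl hχ1) (by simpa using h) hβ
  have hq18 : (10 : ℝ) ^ 18 ≤ q := by exact_mod_cast hq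
  have hx18 : (10 : ℝ) ^ 18 ≤ x := by nlinarith
  have hlog : 9 ≤ Real.log x := nine_le_log (by linarith)
  have hP' : ∀ p ∈ P, p.Prime ∧ q ^ 2 ≤ p ∧ p ≤ x := fun p hp ↦
    ⟨(hP p hp).1, by exact_mod_cast (hP p hp).2.1, (hP p hp).2.2⟩
  rcases le_or_gt (1 / 2) β with hβ0 | hβ0
  · exact sum_prime_character_le_of_half_le hq hχ1 hχ hβ0 hβ1 hβ (by linarith) hlog hP'
  · calc ∑ p ∈ P, (1 + (χ p).re) / p ≤ Real.log x :=
          sum_prime_character_le_log (by linarith) fun p hp ↦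
            ⟨(hP' p hp).1, by nlinarith [(hP' p hp).2.1], (hP' p hp).2.2⟩
      _ ≤ 2 * (1 - β) * Real.log x := le_mul_of_one_le_left (by linarith) (by linarith)

end RealCharacter

end

/-- **Lemma A4**: for `q` sufficiently large, `χ` a real non-principal
Dirichlet character mod `q` and `β` a real zero of `L(s,χ)`, for every
`x ≥ q²`: `∑_{q² ≤ p ≤ x} (1 + χ(p)) p⁻¹ ≤ 2 (1−β) log x`. -/
theorem real_character_prime_sum_bound :
    ∃ Q₀ : ℕ, ∀ (q : ℕ) [NeZero q], Q₀ ≤ q →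
    ∀ χ : DirichletCharacter ℂ q, χ ≠ 1 → (∀ n : ZMod q, (χ n).im = 0) →
    ∀ β : ℝ, χ.LFunction (β : ℂ) = 0 →
    ∀ x : ℝ, (q : ℝ) ^ (2 : ℕ) ≤ x →
    (∑' p : ℕ, if p.Prime ∧ (q : ℝ) ^ (2 : ℕ) ≤ (p : ℝ) ∧ (p : ℝ) ≤ x then
        (1 + (χ ((p : ZMod q))).re) / (p : ℝ) else 0) ≤
      2 * (1 - β) * Real.log x := by
  refine ⟨10 ^ 18, fun q _ hq χ hχ1 hχ β hβ x hx ↦ ?_⟩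
  rw [tsum_eq_sum (s := Finset.range (⌊x⌋₊ + 1)), ← Finset.sum_filter]
  · exact sum_prime_character_le hq hχ1 hχ hβ hx fun p hp ↦ (Finset.mem_filter.1 hp).2
  · intro p hp
    rw [if_neg]
    rintro ⟨-, -, h⟩
    exact hp (Finset.mem_range.2 (Nat.lt_succ_of_le (Nat.le_floor h)))
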